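/- arXiv:q-alg/9605021 — 2 statements merged into one kernel-verified Lean document; each statement's English description precedes it below -/
import Mathlib

section
/- For each 0 ≤ j ≤ n there exists a highest weight vector v_j ∈ Ω for the nonstandard action, namely an element v_j ∈ Ω such that: (i) v_j − [t_j] lies in the ℚ-linear span of the antisymmetrized monomials [a_1 … a_p] with p < n + j, where t_j is the tuple (1, 2, …, j, j+1, j+1+n, j+2, j+2+n, …, n, 2n) of length n + j; (ii) for every 1 ≤ α ≤ n − 1, σ_{α,\overline{α+1}} v_j = v_j σ_{α,\overline{α+1}}, where σ_{α,\overline{α+1}} := σ_α σ_{α+1+n} + σ_{α+1+n} σ_α; and (iii) σ_n v_j + (−1)^{n+j} v_j σ_n = 0. -/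
open scoped BigOperators TensorProduct
open Nat

noncomputable section

/-- The symplectic metric `g` of `osp(1|2n)` (0-indexed). -/
def gmat (n : ℕ) (a b : Fin (2*n)) : ℚ :=
  if (a:ℕ) < n ∧ (b:ℕ) = (a:ℕ) + n then -1
  else if (b:ℕ) < n ∧ (a:ℕ) = (b:ℕ) + n then 1
  else 0

/-- The defining relations of `U(osp(1|2n))`:
`(σₐσ_b + σ_bσₐ)σ_c - σ_c(σₐσ_b + σ_bσₐ) = -g_{ac} σ_b - g_{bc} σₐ`. -/
inductive OspRel (n : ℕ) : FreeAlgebra ℚ (Fin (2*n)) → FreeAlgebra ℚ (Fin (2*n)) → Prop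
  | rel (a b c : Fin (2*n)) : OspRel n
      ((FreeAlgebra.ι ℚ a * FreeAlgebra.ι ℚ b + FreeAlgebra.ι ℚ b * FreeAlgebra.ι ℚ a)
          * FreeAlgebra.ι ℚ c)
      (FreeAlgebra.ι ℚ c *
          (FreeAlgebra.ι ℚ a * FreeAlgebra.ι ℚ b + FreeAlgebra.ι ℚ b * FreeAlgebra.ι ℚ a)
        - algebraMap ℚ (FreeAlgebra ℚ (Fin (2*n))) (gmat n a c) * FreeAlgebra.ι ℚ b
        - algebraMap ℚ (FreeAlgebra ℚ (Fin (2*n))) (gmat n b c) * FreeAlgebra.ι ℚ a)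

/-- The universal enveloping superalgebra `U(osp(1|2n))`. -/
abbrev U (n : ℕ) := RingQuot (OspRel n)

/-- The fermionic generators `σₐ`. -/
def σ (n : ℕ) (a : Fin (2*n)) : U n :=
  RingQuot.mkAlgHom ℚ (OspRel n) (FreeAlgebra.ι ℚ a)

/-- The bosonic generators `σ_{ab} = σₐσ_b + σ_bσₐ`. -/
def σσ (n : ℕ) (a b : Fin (2*n)) : U n := σ n a * σ n b + σ n b * σ n a

/-- The antisymmetrized monomial `[a₁ … a_p]`. -/
def brkt (n : ℕ) (p : ℕ) (a : Fin p → Fin (2*n)) : U n :=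
  ∑ s : Equiv.Perm (Fin p),
    (Equiv.Perm.sign s : ℤ) • (List.ofFn fun i => σ n (a (s i))).prod

/-- `Ω`, the span of all the antisymmetrized monomials. -/
def Omega (n : ℕ) : Submodule ℚ (U n) :=
  Submodule.span ℚ {x | ∃ p, ∃ a : Fin p → Fin (2*n), x = brkt n p a}


/-- The span of the antisymmetrized monomials `[a₁ … a_p]` with `p < N`. -/
def lowBrkt (n : ℕ) (N : ℕ) : Submodule ℚ (U n) :=
  Submodule.span ℚ {x | ∃ p, p < N ∧ ∃ a : Fin p → Fin (2*n), x = brkt n p a}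

/-- The tuple `t_j = (1, 2, …, j, j+1, j+1+n, j+2, j+2+n, …, n, 2n)` (0-indexed), of length
`j + 2(n−j)`. -/
def hwTuple (n j : ℕ) (hj : j ≤ n) : Fin (j + 2*(n-j)) → Fin (2*n) := fun i =>
  if _h : (i:ℕ) < j then ⟨(i:ℕ), by have := i.isLt; omega⟩
  else if _h2 : ((i:ℕ) - j) % 2 = 0 then
    ⟨j + ((i:ℕ) - j)/2, by have := i.isLt; omega⟩
  else ⟨j + ((i:ℕ) - j)/2 + n, by have := i.isLt; omega⟩

section TwistedAdjoint

variable {B : Type*} [Ring B] [Algebra ℚ B]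

/-- The commutator `z ↦ z X - X z`. -/
def commOp (X : B) : B →ₗ[ℚ] B := LinearMap.mulRight ℚ X - LinearMap.mulLeft ℚ X

/-- The anticommutator `z ↦ z X + X z`. -/
def antiOp (X : B) : B →ₗ[ℚ] B := LinearMap.mulRight ℚ X + LinearMap.mulLeft ℚ X

lemma commOp_apply (X z : B) : commOp X z = z * X - X * z := by simp [commOp]

lemma antiOp_apply (X z : B) : antiOp X z = z * X + X * z := by simp [antiOp]

lemma antiOp_commOp (X z : B) : antiOp X (commOp X z) = commOp X (antiOp X z) := by
  simp only [commOp_apply, antiOp_apply]; noncomm_ring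

lemma antiOp_commOp_pow (X z : B) (q : ℕ) :
    antiOp X ((commOp X ^ q) z) = (commOp X ^ q) (antiOp X z) := by
  induction q with
  | zero => simp
  | succ q ih =>
    rw [_root_.pow_succ', Module.End.mul_apply, antiOp_commOp, ih, Module.End.mul_apply]

lemma mul_sandwich_eq (X z : B) :
    X * z * X = (1 / 4 : ℚ) • antiOp X (antiOp X z) - (1 / 4 : ℚ) • commOp X (commOp X z) := by
  have h : antiOp X (antiOp X z) - commOp X (commOp X z) = (4 : ℚ) • (X * z * X) := by
    rw [show (4 : ℚ) • (X * z * X) = X * z * X + X * z * X + X * z * X + X * z * X by module]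
    simp only [commOp_apply, antiOp_apply]; noncomm_ring
  rw [← smul_sub, h, smul_smul]; norm_num

/-- The terms of total degree `p` with at least one factor `G` or `θ`. -/
def remainder (X τ θ G : B) (p : ℕ) : Submodule ℚ B :=
  Submodule.span ℚ ({z | ∃ r q, 2 * (r + 1) + q = p ∧ z = G ^ (r + 1) * (commOp X ^ q) τ} ∪
    {z | ∃ r q, 2 * r + q + 1 = p ∧ z = G ^ r * (θ * X ^ q)})

variable {X τ θ G : B}

lemma commOp_pow_mul (hG : ∀ z, G * z = z * G) (m : ℕ) (z : B) :
    commOp X (G ^ m * z) = G ^ m * commOp X z := by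
  have h : X * G ^ m = G ^ m * X := (Commute.pow_left (hG X) m).symm
  simp only [commOp_apply, mul_sub, ← mul_assoc, h]

lemma antiOp_pow_mul (hG : ∀ z, G * z = z * G) (m : ℕ) (z : B) :
    antiOp X (G ^ m * z) = G ^ m * antiOp X z := by
  have h : X * G ^ m = G ^ m * X := (Commute.pow_left (hG X) m).symm
  simp only [antiOp_apply, mul_add, ← mul_assoc, h]

lemma commOp_theta (hθ : θ * X = -(X * θ)) (q : ℕ) :
    commOp X (θ * X ^ q) = (2 : ℚ) • (θ * X ^ (q + 1)) := by
  have h : X * θ = -(θ * X) := by rw [hθ, neg_neg]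
  rw [commOp_apply, ← mul_assoc, h, neg_mul, sub_neg_eq_add, mul_assoc, mul_assoc,
    ← _root_.pow_succ, ← _root_.pow_succ', two_smul]

lemma antiOp_theta (hθ : θ * X = -(X * θ)) (q : ℕ) : antiOp X (θ * X ^ q) = 0 := by
  have h : X * θ = -(θ * X) := by rw [hθ, neg_neg]
  rw [antiOp_apply, ← mul_assoc, h, neg_mul, mul_assoc, mul_assoc, ← _root_.pow_succ,
    ← _root_.pow_succ', add_neg_cancel]

lemma commOp_pow_theta (hθ : θ * X = -(X * θ)) (q : ℕ) :
    (commOp X ^ q) (θ * X) = (2 ^ q : ℚ) • (θ * X ^ (q + 1)) := by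
  induction q with
  | zero => simp
  | succ q ih =>
    rw [_root_.pow_succ', Module.End.mul_apply, ih, map_smul, commOp_theta hθ, smul_smul,
      ← _root_.pow_succ (2 : ℚ)]

lemma commOp_pow_G_mul (hG : ∀ z, G * z = z * G) (q : ℕ) (z : B) :
    (commOp X ^ q) (G * z) = G * (commOp X ^ q) z := by
  induction q with
  | zero => simp
  | succ q ih =>
    rw [_root_.pow_succ', Module.End.mul_apply, ih]
    simpa using commOp_pow_mul (X := X) hG 1 ((commOp X ^ q) z)

lemma antiOp_antiOp_commOp_pow (hG : ∀ z, G * z = z * G) (hθ : θ * X = -(X * θ))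
    (hτ : antiOp X (antiOp X τ) = G * τ + θ * X) (q : ℕ) :
    antiOp X (antiOp X ((commOp X ^ q) τ)) =
      G * (commOp X ^ q) τ + (2 ^ q : ℚ) • (θ * X ^ (q + 1)) := by
  rw [antiOp_commOp_pow, antiOp_commOp_pow, hτ, map_add, commOp_pow_G_mul hG,
    commOp_pow_theta hθ]

lemma mem_remainder_comm {p r q : ℕ} (h : 2 * (r + 1) + q = p) :
    G ^ (r + 1) * (commOp X ^ q) τ ∈ remainder X τ θ G p :=
  Submodule.subset_span (Or.inl ⟨r, q, h, rfl⟩)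

lemma mem_remainder_theta {p r q : ℕ} (h : 2 * r + q + 1 = p) :
    G ^ r * (θ * X ^ q) ∈ remainder X τ θ G p :=
  Submodule.subset_span (Or.inr ⟨r, q, h, rfl⟩)

lemma commOp_mem_remainder (hG : ∀ z, G * z = z * G) (hθ : θ * X = -(X * θ)) {p : ℕ} {z : B}
    (hz : z ∈ remainder X τ θ G p) : commOp X z ∈ remainder X τ θ G (p + 1) := by
  refine (Submodule.span_le (p := (remainder X τ θ G (p + 1)).comap (commOp X))).2 ?_ hz
  rintro _ (⟨r, q, h, rfl⟩ | ⟨r, q, h, rfl⟩)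
  · rw [SetLike.mem_coe, Submodule.mem_comap, commOp_pow_mul hG, ← Module.End.mul_apply,
      ← _root_.pow_succ']
    exact mem_remainder_comm (by omega)
  · rw [SetLike.mem_coe, Submodule.mem_comap, commOp_pow_mul hG, commOp_theta hθ, mul_smul_comm]
    exact Submodule.smul_mem _ _ (mem_remainder_theta (by omega))

lemma antiOp_antiOp_mem_remainder (hG : ∀ z, G * z = z * G) (hθ : θ * X = -(X * θ))
    (hτ : antiOp X (antiOp X τ) = G * τ + θ * X) {p : ℕ} {z : B}
    (hz : z ∈ remainder X τ θ G p) : antiOp X (antiOp X z) ∈ remainder X τ θ G (p + 2) := by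
  refine (Submodule.span_le
    (p := (remainder X τ θ G (p + 2)).comap (antiOp X ∘ₗ antiOp X))).2 ?_ hz
  rintro _ (⟨r, q, h, rfl⟩ | ⟨r, q, h, rfl⟩)
  · rw [SetLike.mem_coe, Submodule.mem_comap, LinearMap.comp_apply, antiOp_pow_mul hG,
      antiOp_pow_mul hG, antiOp_antiOp_commOp_pow hG hθ hτ, mul_add, ← mul_assoc, ← _root_.pow_succ,
      mul_smul_comm]
    exact add_mem (mem_remainder_comm (by omega))
      (Submodule.smul_mem _ _ (mem_remainder_theta (by omega)))
  · rw [SetLike.mem_coe, Submodule.mem_comap, LinearMap.comp_apply, antiOp_pow_mul hG,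
      antiOp_theta hθ]
    simp

/-- A sequence obeying the recursion of the symmetric polynomials in `z ↦ z X` and `z ↦ -X z`
is, up to the remainder, a multiple of the iterated commutators. -/
lemma sub_commOp_pow_mem_remainder (hG : ∀ z, G * z = z * G) (hθ : θ * X = -(X * θ))
    (hτ : antiOp X (antiOp X τ) = G * τ + θ * X) (z : ℕ → B) (k : ℕ → ℚ)
    (h0 : z 0 = k 0 • τ) (h1 : z 1 = k 1 • commOp X τ)
    (hz : ∀ p, z (p + 2) = commOp X (z (p + 1)) + X * z p * X)
    (hk : ∀ p, k (p + 2) = k (p + 1) - k p / 4) (p : ℕ) :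
    z p - k p • (commOp X ^ p) τ ∈ remainder X τ θ G p := by
  induction p using Nat.twoStepInduction with
  | zero => simp [h0]
  | one => simp [h1]
  | more p ih ih' =>
    have e : z (p + 2) - k (p + 2) • (commOp X ^ (p + 2)) τ =
        commOp X (z (p + 1) - k (p + 1) • (commOp X ^ (p + 1)) τ)
        - (1 / 4 : ℚ) • commOp X (commOp X (z p - k p • (commOp X ^ p) τ))
        + (1 / 4 : ℚ) • antiOp X (antiOp X (z p - k p • (commOp X ^ p) τ))
        + (k p / 4) • antiOp X (antiOp X ((commOp X ^ p) τ)) := by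
      rw [hz, hk, mul_sandwich_eq]
      simp only [map_sub, map_smul, _root_.pow_succ', Module.End.mul_apply]
      module
    rw [e, antiOp_antiOp_commOp_pow hG hθ hτ]
    refine add_mem (add_mem (sub_mem (commOp_mem_remainder hG hθ ih') (Submodule.smul_mem _ _
      (commOp_mem_remainder hG hθ (commOp_mem_remainder hG hθ ih)))) (Submodule.smul_mem _ _
      (antiOp_antiOp_mem_remainder hG hθ hτ ih))) (Submodule.smul_mem _ _ (add_mem ?_
      (Submodule.smul_mem _ _ ?_)))
    · simpa using mem_remainder_comm (X := X) (τ := τ) (θ := θ) (G := G) (r := 0) (q := p)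
        (p := p + 2) (by omega)
    · simpa using mem_remainder_theta (X := X) (τ := τ) (θ := θ) (G := G) (r := 0) (q := p + 1)
        (p := p + 2) (by omega)

lemma twisted_sub_mem_remainder (hG : ∀ z, G * z = z * G) (hθ : θ * X = -(X * θ))
    (hτ : antiOp X (antiOp X τ) = G * τ + θ * X) (p : ℕ) :
    (τ * X ^ p + (-X) ^ p * τ) - (2 / 2 ^ p : ℚ) • (commOp X ^ p) τ ∈ remainder X τ θ G p := by
  refine sub_commOp_pow_mem_remainder hG hθ hτ (fun p => τ * X ^ p + (-X) ^ p * τ)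
    (fun p => 2 / 2 ^ p) ?_ ?_ (fun p => ?_) (fun p => ?_) p
  · simp [two_smul]
  · simp [commOp_apply, sub_eq_add_neg]
  · simp only [commOp_apply, _root_.pow_succ' (-X), _root_.pow_succ X]; noncomm_ring
  · simp only [_root_.pow_succ]; field_simp; norm_num

lemma contraction_sub_mem_remainder (hG : ∀ z, G * z = z * G) (hθ : θ * X = -(X * θ))
    (hτ : antiOp X (antiOp X τ) = G * τ + θ * X) (D : B →ₗ[ℚ] B)
    (hDX : ∀ z, D (X * z) = τ * z - X * D z) (hD1 : D 1 = 0) (p : ℕ) :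
    D (X ^ (p + 1)) - ((p + 1) / 2 ^ p : ℚ) • (commOp X ^ p) τ ∈ remainder X τ θ G p := by
  have hs : ∀ p, D (X ^ (p + 1)) = τ * X ^ p - X * D (X ^ p) := fun p => by
    rw [_root_.pow_succ', hDX]
  refine sub_commOp_pow_mem_remainder hG hθ hτ (fun p => D (X ^ (p + 1)))
    (fun p => (p + 1) / 2 ^ p) ?_ ?_ (fun p => ?_) (fun p => ?_) p
  · simp [show D X = τ by simpa [hD1] using hs 0]
  · simp only [hs, commOp_apply]; norm_num [hD1]
  · rw [commOp_apply, hs (p + 2), hs (p + 1), _root_.pow_succ X (p + 1)]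
    noncomm_ring
  · simp only [_root_.pow_succ]; push_cast; field_simp; ring

/-- If `I` vanishes on the image of the antiderivation `D`, then `X ^ P` can be corrected by
multiples of the `G ^ m * X ^ q`, `m ≥ 1`, so that its twisted commutator with `τ` is killed
by `I`. -/
theorem exists_twisted_comm_eq_zero {W : Type*} [AddCommGroup W] [Module ℚ W]
    (hG : ∀ z, G * z = z * G) (hθ : θ * X = -(X * θ))
    (hτ : antiOp X (antiOp X τ) = G * τ + θ * X) (D : B →ₗ[ℚ] B)
    (hDX : ∀ z, D (X * z) = τ * z - X * D z) (hD1 : D 1 = 0)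
    (hDG : ∀ z, D (G * z) = (-2 : ℚ) • (θ * z) + G * D z)
    (I : B →ₗ[ℚ] W) (hI : ∀ z, I (D z) = 0) (P : ℕ) :
    ∃ F, F - X ^ P ∈ Submodule.span ℚ {z | ∃ m q, 2 * (m + 1) + q = P ∧ z = G ^ (m + 1) * X ^ q} ∧
      I (τ * F + (-1 : ℚ) ^ P • (F * τ)) = 0 := by
  have hGm : ∀ m z, G ^ m * z = z * G ^ m := fun m z => Commute.pow_left (hG z) m
  set u : ℕ → B := fun p => τ * X ^ p + (-X) ^ p * τ with hu
  set Y : ℕ → Submodule ℚ W := fun m =>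
    Submodule.span ℚ {w | ∃ m' q, m ≤ m' ∧ 2 * m' + q = P ∧ w = I (G ^ m' * u q)} with hY
  have hYmono : ∀ {m m'}, m ≤ m' → Y m' ≤ Y m := fun h =>
    Submodule.span_mono (by rintro _ ⟨a, q, h1, h2, rfl⟩; exact ⟨a, q, h.trans h1, h2, rfl⟩)
  have hYmem : ∀ {m q}, 2 * m + q = P → I (G ^ m * u q) ∈ Y m := fun {m q} h =>
    Submodule.subset_span ⟨m, q, le_rfl, h, rfl⟩
  -- the contraction of a monomial integrates to a multiple of a `θ` term
  have hDpow : ∀ (m : ℕ) (z : B), D (G ^ (m + 1) * z) =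
      (-2 * (m + 1) : ℚ) • (G ^ m * (θ * z)) + G ^ (m + 1) * D z := by
    intro m
    induction m with
    | zero => intro z; simp [hDG]
    | succ m ih =>
      intro z
      rw [_root_.pow_succ' G (m + 1), mul_assoc, hDG, ih, ← mul_assoc θ, ← hGm,
        mul_assoc (G ^ (m + 1)), mul_add, mul_smul_comm, ← mul_assoc G, ← mul_assoc G,
        ← _root_.pow_succ', ← _root_.pow_succ']
      push_cast
      module
  have hrem : ∀ (Y' : Submodule ℚ W) m p,
      (∀ r q, 2 * (r + 1) + q = p → I (G ^ (m + r + 1) * (commOp X ^ q) τ) ∈ Y') →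
      (∀ r q, 2 * r + q + 1 = p → I (G ^ (m + r) * (θ * X ^ q)) ∈ Y') →
      ∀ z ∈ remainder X τ θ G p, I (G ^ m * z) ∈ Y' := by
    intro Y' m p h1 h2 z hz
    refine (Submodule.span_le (p := Y'.comap (I ∘ₗ LinearMap.mulLeft ℚ (G ^ m)))).2 ?_ hz
    rintro _ (⟨r, q, h, rfl⟩ | ⟨r, q, h, rfl⟩)
    · simpa [← mul_assoc, ← pow_add, add_assoc] using h1 r q h
    · simpa [← mul_assoc, ← pow_add] using h2 r q h
  have hsolve : ∀ (Y' : Submodule ℚ W) m p (z : B) (k : ℚ), k ≠ 0 →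
      z - k • (commOp X ^ p) τ ∈ remainder X τ θ G p →
      (∀ z ∈ remainder X τ θ G p, I (G ^ m * z) ∈ Y') →
      (I (G ^ m * z) ∈ Y' ↔ I (G ^ m * (commOp X ^ p) τ) ∈ Y') := by
    intro Y' m p z k hk hz hr
    have h := hr _ hz
    rw [mul_sub, map_sub, mul_smul_comm, map_smul] at h
    exact ⟨fun hz => (Submodule.smul_mem_iff _ hk).1 ((Submodule.sub_mem_iff_right _ hz).1 h),
      fun hs => (Submodule.sub_mem_iff_left _ (Submodule.smul_mem _ _ hs)).1 h⟩
  have key : ∀ p, (∀ m, 1 ≤ m → 2 * m + p = P → I (G ^ m * (commOp X ^ p) τ) ∈ Y m) ∧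
      ∀ m, 2 * m + p + 1 = P → I (G ^ m * (θ * X ^ p)) ∈ Y (m + 1) := by
    intro p
    induction p using Nat.strong_induction_on with
    | _ p ih =>
    have hr : ∀ p' ≤ p, ∀ m, 2 * m + p' = P → ∀ z ∈ remainder X τ θ G p',
        I (G ^ m * z) ∈ Y (m + 1) := by
      intro p' hp' m hm
      refine hrem _ _ _ (fun r q h => ?_) (fun r q h => ?_)
      · exact hYmono (by omega) ((ih q (by omega)).1 (m + r + 1) (by omega) (by omega))
      · exact hYmono (by omega) ((ih q (by omega)).2 (m + r) (by omega))
    refine ⟨fun m _ hm => ?_, fun m hm => ?_⟩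
    · exact (hsolve _ m p (u p) _ (by positivity) (twisted_sub_mem_remainder hG hθ hτ p)
        fun z hz => hYmono (by omega) (hr p le_rfl m hm z hz)).1 (hYmem hm)
    · have hθmem : I (G ^ (m + 1) * D (X ^ p)) ∈ Y (m + 1) := by
        cases p with
        | zero => simp [hD1]
        | succ p =>
          exact (hsolve _ (m + 1) p _ _ (by positivity)
            (contraction_sub_mem_remainder hG hθ hτ D hDX hD1 p)
            fun z hz => hYmono (by omega) (hr p (by omega) (m + 1) (by omega) z hz)).2
            ((ih p (by omega)).1 (m + 1) (by omega) (by omega))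
      have h := hI (G ^ (m + 1) * X ^ p)
      rw [hDpow, map_add, map_smul] at h
      have h' := neg_mem hθmem
      rw [← eq_neg_of_add_eq_zero_left h] at h'
      have hm0 : (-2 * (m + 1) : ℚ) ≠ 0 := mul_ne_zero (by norm_num) (by positivity)
      exact (Submodule.smul_mem_iff _ hm0).1 h'
  have hr0 : ∀ z ∈ remainder X τ θ G P, I (G ^ 0 * z) ∈ Y 1 :=
    hrem _ _ _ (fun r q h => hYmono (by omega) ((key q).1 (0 + r + 1) (by omega) (by omega)))
      (fun r q h => hYmono (by omega) ((key q).2 (0 + r) (by omega)))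
  have htop : I (u P) ∈ Y 1 := by
    have h1 := (hsolve (Y 1) 0 P _ _ (by positivity)
      (contraction_sub_mem_remainder hG hθ hτ D hDX hD1 P) hr0).1 (by simp [hI])
    simpa using (hsolve (Y 1) 0 P (u P) _ (by positivity)
      (twisted_sub_mem_remainder hG hθ hτ P) hr0).2 h1
  set T : B →ₗ[ℚ] W :=
    I ∘ₗ (LinearMap.mulLeft ℚ τ + (-1 : ℚ) ^ P • LinearMap.mulRight ℚ τ) with hT
  have hTmon : ∀ m q, 2 * m + q = P → T (G ^ m * X ^ q) = I (G ^ m * u q) := by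
    intro m q h
    have hpar : (-1 : ℚ) ^ P = (-1) ^ q := by rw [← h, pow_add, pow_mul]; simp
    have hneg : (-X) ^ q = (-1 : ℚ) ^ q • X ^ q := by
      rw [← neg_one_smul ℚ X, smul_pow]
    simp only [hT, hu, LinearMap.comp_apply, LinearMap.add_apply, LinearMap.smul_apply,
      LinearMap.mulLeft_apply, LinearMap.mulRight_apply, hpar, hneg, mul_add, ← mul_assoc,
      hGm m τ, smul_mul_assoc, mul_smul_comm]
  have hYT : Y 1 ≤ (Submodule.span ℚ
      {z | ∃ m q, 2 * (m + 1) + q = P ∧ z = G ^ (m + 1) * X ^ q}).map T := by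
    refine Submodule.span_le.2 ?_
    rintro _ ⟨m, q, hm, h, rfl⟩
    obtain ⟨m, rfl⟩ := Nat.exists_eq_add_of_le' hm
    exact ⟨_, Submodule.subset_span ⟨m, q, h, rfl⟩, hTmon _ _ h⟩
  obtain ⟨F, hF, hTF⟩ := hYT htop
  refine ⟨X ^ P - F, by simpa using neg_mem hF, ?_⟩
  have h : T (X ^ P - F) = 0 := by
    rw [map_sub, hTF, sub_eq_zero]
    simpa using hTmon 0 P (by omega)
  simpa [hT] using h

end TwistedAdjoint

section Antisymmetrization

open ExteriorAlgebra

lemma exterior_contractLeft_ι_mul {M : Type*} [AddCommGroup M] [Module ℚ M]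
    (d : Module.Dual ℚ M) (v : M) (z : ExteriorAlgebra ℚ M) :
    CliffordAlgebra.contractLeft (Q := 0) d (ExteriorAlgebra.ι ℚ v * z) =
      d v • z - ExteriorAlgebra.ι ℚ v * CliffordAlgebra.contractLeft (Q := 0) d z :=
  CliffordAlgebra.contractLeft_ι_mul (Q := 0) (d := d) v z

lemma exterior_contractLeft_one {M : Type*} [AddCommGroup M] [Module ℚ M] (d : Module.Dual ℚ M) :
    CliffordAlgebra.contractLeft (Q := 0) d (1 : ExteriorAlgebra ℚ M) = 0 :=
  CliffordAlgebra.contractLeft_one (Q := 0) d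

variable {ι : Type*}

/-- Contraction with the `i`-th coordinate. -/
def contract (i : ι) : ExteriorAlgebra ℚ (ι → ℚ) →ₗ[ℚ] ExteriorAlgebra ℚ (ι → ℚ) :=
  CliffordAlgebra.contractLeft (Q := 0) (LinearMap.proj i)

lemma contract_ι_mul (i : ι) (v : ι → ℚ) (z : ExteriorAlgebra ℚ (ι → ℚ)) :
    contract i (ExteriorAlgebra.ι ℚ v * z) = v i • z - ExteriorAlgebra.ι ℚ v * contract i z :=
  exterior_contractLeft_ι_mul _ v z

lemma contract_one (i : ι) : contract i (1 : ExteriorAlgebra ℚ (ι → ℚ)) = 0 :=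
  exterior_contractLeft_one _

lemma contract_contract (i : ι) (z : ExteriorAlgebra ℚ (ι → ℚ)) :
    contract i (contract i z) = 0 :=
  CliffordAlgebra.contractLeft_contractLeft _ _

lemma contract_comm (i k : ι) (z : ExteriorAlgebra ℚ (ι → ℚ)) :
    contract i (contract k z) = -contract k (contract i z) :=
  CliffordAlgebra.contractLeft_comm _ _ _

lemma contract_ιMulti (i : ι) (p : ℕ) (v : Fin (p + 1) → ι → ℚ) :
    contract i (ιMulti ℚ (p + 1) v) =
      ∑ k : Fin (p + 1), ((-1 : ℚ) ^ (k : ℕ) * v k i) •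
        ιMulti ℚ p (fun l => v (k.succAbove l)) := by
  induction p with
  | zero =>
    rw [ιMulti_succ_apply, contract_ι_mul]
    simp [contract_one]
  | succ p ih =>
    rw [ιMulti_succ_apply, contract_ι_mul, ih, Fin.sum_univ_succ (n := p + 1), Finset.mul_sum,
      sub_eq_add_neg, ← Finset.sum_neg_distrib]
    congr 1
    · simp [Matrix.vecTail, Function.comp_def]
    · refine Finset.sum_congr rfl fun k _ => ?_
      rw [ιMulti_succ_apply (n := p)]
      simp [Matrix.vecTail, Function.comp_def, _root_.pow_succ]

variable {A : Type*} [Ring A] [Algebra ℚ A]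

/-- Apply a functional to the first tensor factor. -/
def slice (ψ : ExteriorAlgebra ℚ (ι → ℚ) →ₗ[ℚ] ℚ) :
    ExteriorAlgebra ℚ (ι → ℚ) ⊗[ℚ] A →ₗ[ℚ] A :=
  (TensorProduct.lid ℚ A).toLinearMap ∘ₗ ψ.rTensor A

lemma slice_tmul (ψ : ExteriorAlgebra ℚ (ι → ℚ) →ₗ[ℚ] ℚ) (x : ExteriorAlgebra ℚ (ι → ℚ)) (y : A) :
    slice ψ (x ⊗ₜ y) = ψ x • y := by
  simp [slice]

lemma slice_one_tmul_mul (ψ : ExteriorAlgebra ℚ (ι → ℚ) →ₗ[ℚ] ℚ) (y : A)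
    (z : ExteriorAlgebra ℚ (ι → ℚ) ⊗[ℚ] A) : slice ψ ((1 ⊗ₜ y) * z) = y * slice ψ z := by
  induction z using TensorProduct.induction_on with
  | zero => simp
  | tmul a b => simp [slice_tmul]
  | add a b ha hb => rw [mul_add, map_add, map_add, mul_add, ha, hb]

lemma slice_mul_one_tmul (ψ : ExteriorAlgebra ℚ (ι → ℚ) →ₗ[ℚ] ℚ) (y : A)
    (z : ExteriorAlgebra ℚ (ι → ℚ) ⊗[ℚ] A) : slice ψ (z * (1 ⊗ₜ y)) = slice ψ z * y := by
  induction z using TensorProduct.induction_on with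
  | zero => simp
  | tmul a b => simp [slice_tmul]
  | add a b ha hb => rw [add_mul, map_add, map_add, add_mul, ha, hb]

/-- The successive contractions along a list, its head first. -/
def contractList : List ι → ExteriorAlgebra ℚ (ι → ℚ) →ₗ[ℚ] ExteriorAlgebra ℚ (ι → ℚ)
  | [] => LinearMap.id
  | a :: l => contractList l ∘ₗ contract a

lemma contractList_contract {l : List ι} {b : ι} (hb : b ∈ l) (z : ExteriorAlgebra ℚ (ι → ℚ)) :
    contractList l (contract b z) = 0 := by
  induction l generalizing z with
  | nil => simp at hb
  | cons a l ih =>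
    rw [contractList, LinearMap.comp_apply]
    by_cases h : b = a
    · rw [h, contract_contract, map_zero]
    · rw [contract_comm, map_neg, ih (List.mem_of_ne_of_mem h hb), neg_zero]

/-- The coefficient functional of the monomial indexed by a list. -/
def coeffList (l : List ι) : ExteriorAlgebra ℚ (ι → ℚ) →ₗ[ℚ] ℚ :=
  ExteriorAlgebra.algebraMapInv.toLinearMap ∘ₗ contractList l

lemma coeffList_contract {l : List ι} {b : ι} (hb : b ∈ l) (z : ExteriorAlgebra ℚ (ι → ℚ)) :
    coeffList l (contract b z) = 0 := by
  rw [coeffList, LinearMap.comp_apply, contractList_contract hb, map_zero]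

lemma coeffList_ιMulti (p : ℕ) (t : Fin p → ι) (v : Fin p → ι → ℚ) :
    coeffList (List.ofFn t) (ιMulti ℚ p v) = (Matrix.of fun i k => v k (t i)).det := by
  induction p with
  | zero => simp [coeffList, contractList]
  | succ p ih =>
    have h : coeffList (List.ofFn t) (ιMulti ℚ (p + 1) v) =
        coeffList (List.ofFn fun i => t i.succ) (contract (t 0) (ιMulti ℚ (p + 1) v)) := by
      rw [List.ofFn_succ]; rfl
    rw [h, contract_ιMulti, map_sum, Matrix.det_succ_row_zero]
    refine Finset.sum_congr rfl fun k _ => ?_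
    rw [map_smul, ih, smul_eq_mul]
    rfl

variable [DecidableEq ι]

/-- The basis vectors of the exterior algebra on `ι → ℚ`. -/
def basisVec (i : ι) : ExteriorAlgebra ℚ (ι → ℚ) := ExteriorAlgebra.ι ℚ (Pi.single i 1)

lemma contract_basisVec_mul (i a : ι) (z : ExteriorAlgebra ℚ (ι → ℚ)) :
    contract i (basisVec a * z) = (if i = a then (1 : ℚ) else 0) • z
      - basisVec a * contract i z := by
  rw [basisVec, contract_ι_mul, Pi.single_apply]

lemma coeffList_basisVec_mul {l : List ι} {c : ι} (hc : c ∉ l) (z : ExteriorAlgebra ℚ (ι → ℚ)) :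
    coeffList l (basisVec c * z) = 0 := by
  induction l generalizing z with
  | nil =>
    simp [coeffList, contractList, basisVec, ExteriorAlgebra.algebraMapInv]
  | cons a l ih =>
    have h : coeffList (a :: l) (basisVec c * z) = coeffList l (contract a (basisVec c * z)) := rfl
    rw [List.mem_cons, not_or] at hc
    rw [h, contract_basisVec_mul, if_neg (Ne.symm hc.1), zero_smul, zero_sub, map_neg, ih hc.2,
      neg_zero]

lemma coeffList_basisVec_mul_contract {l : List ι} {b c : ι} (hbc : b ≠ c)
    (h : b ∈ l ∨ c ∉ l) (z : ExteriorAlgebra ℚ (ι → ℚ)) :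
    coeffList l (basisVec c * contract b z) = 0 := by
  rcases h with h | h
  · have e := contract_basisVec_mul b c z
    rw [if_neg hbc, zero_smul, zero_sub] at e
    rw [← neg_eq_iff_eq_neg.2 e, map_neg, coeffList_contract h, neg_zero]
  · exact coeffList_basisVec_mul h _

variable [Fintype ι] (s : ι → A)

/-- The generic element `∑ₐ eₐ ⊗ sₐ`. -/
def genericElt : ExteriorAlgebra ℚ (ι → ℚ) ⊗[ℚ] A := ∑ a, basisVec a ⊗ₜ s a

/-- The antisymmetrized monomials in the `sₐ`. -/
def antisymmMonomial (p : ℕ) (a : Fin p → ι) : A :=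
  ∑ π : Equiv.Perm (Fin p),
    (Equiv.Perm.sign π : ℤ) • (List.ofFn fun i => s (a (π i))).prod

lemma genericElt_pow (p : ℕ) : genericElt s ^ p =
    ∑ a : Fin p → ι, ιMulti ℚ p (fun i => Pi.single (a i) 1) ⊗ₜ[ℚ]
      (List.ofFn fun i => s (a i)).prod := by
  induction p with
  | zero => simp [Algebra.TensorProduct.one_def]
  | succ p ih =>
    rw [_root_.pow_succ', ih, genericElt, Finset.sum_mul_sum, ← Fintype.sum_prod_type',
      ← (Fin.consEquiv fun _ => ι).sum_comp]
    refine Finset.sum_congr rfl fun x _ => ?_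
    rw [ιMulti_succ_apply, List.ofFn_succ, List.prod_cons,
      Algebra.TensorProduct.tmul_mul_tmul]
    simp [Fin.consEquiv, Matrix.vecTail, Function.comp_def, basisVec]

lemma slice_coeffList_genericElt_pow (p : ℕ) (t : Fin p → ι) :
    slice (coeffList (List.ofFn t)) (genericElt s ^ p) = antisymmMonomial s p t := by
  simp only [genericElt_pow, map_sum, slice_tmul, coeffList_ιMulti, Matrix.det_apply,
    Finset.sum_smul, antisymmMonomial]
  rw [Finset.sum_comm]
  refine Finset.sum_congr rfl fun π _ => ?_
  rw [Finset.sum_eq_single fun i => t (π i)]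
  · simp [Units.smul_def, Int.cast_smul_eq_zsmul]
  · intro a _ ha
    obtain ⟨i, hi⟩ := Function.ne_iff.1 ha
    rw [Finset.prod_eq_zero (Finset.mem_univ i), smul_zero, zero_smul]
    simp [Pi.single_apply, Ne.symm hi]
  · simp

lemma slice_genericElt_pow_mem (ψ : ExteriorAlgebra ℚ (ι → ℚ) →ₗ[ℚ] ℚ) (p : ℕ) :
    slice ψ (genericElt s ^ p) ∈ Submodule.span ℚ (Set.range (antisymmMonomial s p)) := by
  set c : (Fin p → ι) → ℚ := fun a => ψ (ιMulti ℚ p fun i => Pi.single (a i) 1) with hc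
  have hsign : ∀ (π : Equiv.Perm (Fin p)) (a : Fin p → ι),
      (Equiv.Perm.sign π : ℤ) • c a = c (fun i => a (π i)) := fun π a => by
    have := (ιMulti ℚ p (M := ι → ℚ)).map_perm (fun i => Pi.single (a i) 1) π
    simp only [hc]
    rw [show (fun i => Pi.single (a (π i)) (1 : ℚ)) =
      (fun i => Pi.single (a i) (1 : ℚ) : Fin p → ι → ℚ) ∘ π from rfl, this, Units.smul_def,
      map_zsmul]
  have hπ : ∀ π : Equiv.Perm (Fin p), ∑ a : Fin p → ι,
      c a • (Equiv.Perm.sign π : ℤ) • (List.ofFn fun i => s (a (π i))).prod =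
      ∑ a : Fin p → ι, c a • (List.ofFn fun i => s (a i)).prod := fun π => by
    refine Eq.trans (Finset.sum_congr rfl fun a _ => ?_)
      ((Equiv.arrowCongr π.symm (Equiv.refl ι)).sum_comp
        fun a => c a • (List.ofFn fun i => s (a i)).prod)
    rw [smul_comm, ← smul_assoc, hsign]
    rfl
  have h : (p.factorial : ℚ) • slice ψ (genericElt s ^ p) = ∑ a, c a • antisymmMonomial s p a := by
    simp only [genericElt_pow, map_sum, slice_tmul, antisymmMonomial, Finset.smul_sum]
    rw [Finset.sum_comm, Finset.sum_congr rfl (fun π _ => hπ π)]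
    simp [hc, ← Finset.smul_sum, Fintype.card_perm, ← Nat.cast_smul_eq_nsmul ℚ]
  have hp : (p.factorial : ℚ) ≠ 0 := by exact_mod_cast p.factorial_ne_zero
  rw [← Submodule.smul_mem_iff _ hp, h]
  exact Submodule.sum_mem _ fun a _ => Submodule.smul_mem _ _ (Submodule.subset_span ⟨a, rfl⟩)

end Antisymmetrization

section OspRelations

variable {ι : Type*} {A : Type*} [Ring A] [Algebra ℚ A]

/-- Contraction on the first tensor factor. -/
def contractTensor (i : ι) :
    ExteriorAlgebra ℚ (ι → ℚ) ⊗[ℚ] A →ₗ[ℚ] ExteriorAlgebra ℚ (ι → ℚ) ⊗[ℚ] A :=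
  (contract i).rTensor A

lemma contractTensor_one (i : ι) :
    contractTensor i (1 : ExteriorAlgebra ℚ (ι → ℚ) ⊗[ℚ] A) = 0 := by
  rw [Algebra.TensorProduct.one_def, contractTensor, LinearMap.rTensor_tmul, contract_one,
    TensorProduct.zero_tmul]

variable [Fintype ι] [DecidableEq ι] (g : ι → ι → ℚ)

/-- The vector `∑_c g_{ac} e_c`. -/
def lowered (a : ι) : ExteriorAlgebra ℚ (ι → ℚ) := ∑ c, g a c • basisVec c

/-- The bivector `-∑_{b,c} g_{bc} e_b e_c`. -/
def bivector : ExteriorAlgebra ℚ (ι → ℚ) := -∑ b, basisVec b * lowered g b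

lemma lowered_eq_ι (a : ι) : lowered g a = ExteriorAlgebra.ι ℚ (g a) := by
  simp only [lowered, basisVec, ← map_smul, ← map_sum]
  congr 1
  ext i
  simp [Pi.single_apply]

lemma ι_mul_ι_swap {M : Type*} [AddCommGroup M] [Module ℚ M] (v w : M) :
    ExteriorAlgebra.ι ℚ v * ExteriorAlgebra.ι ℚ w =
      -(ExteriorAlgebra.ι ℚ w * ExteriorAlgebra.ι ℚ v) :=
  eq_neg_of_add_eq_zero_left (ExteriorAlgebra.ι_add_mul_swap v w)

lemma bivector_mul_comm (z : ExteriorAlgebra ℚ (ι → ℚ)) : bivector g * z = z * bivector g := by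
  induction z using ExteriorAlgebra.induction with
  | algebraMap r => exact (Algebra.commutes r _).symm
  | ι v =>
    simp only [bivector, neg_mul, mul_neg, Finset.sum_mul, Finset.mul_sum, lowered_eq_ι, basisVec]
    congr 1
    refine Finset.sum_congr rfl fun b _ => ?_
    rw [mul_assoc, ι_mul_ι_swap (g b) v, mul_neg, ← mul_assoc, ι_mul_ι_swap _ v, neg_mul, neg_neg,
      mul_assoc]
  | mul x y hx hy => rw [← mul_assoc, hx, mul_assoc, hy, mul_assoc]
  | add x y hx hy => rw [mul_add, add_mul, hx, hy]

lemma contract_lowered_mul (i a : ι) (z : ExteriorAlgebra ℚ (ι → ℚ)) :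
    contract i (lowered g a * z) = g a i • z - lowered g a * contract i z := by
  rw [lowered_eq_ι, contract_ι_mul]

variable {g}

lemma contract_bivector_mul (hg : ∀ a b, g a b = -g b a) (i : ι)
    (z : ExteriorAlgebra ℚ (ι → ℚ)) :
    contract i (bivector g * z) = (-2 : ℚ) • (lowered g i * z) + bivector g * contract i z := by
  have h : ∑ b, basisVec b * g b i • z = -(lowered g i * z) := by
    rw [lowered, Finset.sum_mul, ← Finset.sum_neg_distrib]
    refine Finset.sum_congr rfl fun b _ => ?_
    rw [hg b i, mul_smul_comm, smul_mul_assoc, neg_smul]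
  have e : contract i (bivector g * z) =
      -(lowered g i * z) + ∑ b, basisVec b * g b i • z + bivector g * contract i z := by
    simp only [bivector, neg_mul, Finset.sum_mul, map_neg, map_sum, mul_assoc,
      contract_basisVec_mul, contract_lowered_mul, mul_sub, Finset.sum_sub_distrib]
    simp only [ite_smul, one_smul, zero_smul, Finset.sum_ite_eq, Finset.mem_univ, if_true]
    abel
  rw [e, h]
  module

variable (s : ι → A)

lemma contractTensor_genericElt_mul (i : ι) (z : ExteriorAlgebra ℚ (ι → ℚ) ⊗[ℚ] A) :
    contractTensor i (genericElt s * z) =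
      (1 ⊗ₜ s i) * z - genericElt s * contractTensor i z := by
  induction z using TensorProduct.induction_on with
  | zero => simp
  | tmul x y =>
    simp only [genericElt, contractTensor, Finset.sum_mul, map_sum,
      Algebra.TensorProduct.tmul_mul_tmul, LinearMap.rTensor_tmul, contract_basisVec_mul,
      TensorProduct.sub_tmul, Finset.sum_sub_distrib]
    simp [ite_smul, TensorProduct.ite_tmul]
  | add x y hx hy => simp only [mul_add, map_add, hx, hy]; abel

lemma contractTensor_bivector_mul (hg : ∀ a b, g a b = -g b a) (i : ι)
    (z : ExteriorAlgebra ℚ (ι → ℚ) ⊗[ℚ] A) :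
    contractTensor i ((bivector g ⊗ₜ 1) * z) =
      (-2 : ℚ) • ((lowered g i ⊗ₜ 1) * z) + (bivector g ⊗ₜ 1) * contractTensor i z := by
  induction z using TensorProduct.induction_on with
  | zero => simp
  | tmul x y =>
    simp only [contractTensor, Algebra.TensorProduct.tmul_mul_tmul, LinearMap.rTensor_tmul,
      contract_bivector_mul hg, TensorProduct.add_tmul, one_mul, TensorProduct.smul_tmul']
  | add x y hx hy => simp only [mul_add, map_add, hx, hy, smul_add]; abel

lemma bivector_tmul_one_mul (z : ExteriorAlgebra ℚ (ι → ℚ) ⊗[ℚ] A) :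
    (bivector g ⊗ₜ 1) * z = z * (bivector g ⊗ₜ 1) := by
  induction z using TensorProduct.induction_on with
  | zero => simp
  | tmul x y => simp [bivector_mul_comm]
  | add x y hx hy => rw [mul_add, add_mul, hx, hy]

lemma lowered_tmul_one_mul_genericElt (a : ι) :
    (lowered g a ⊗ₜ 1) * genericElt s = -(genericElt s * (lowered g a ⊗ₜ 1)) := by
  simp only [genericElt, Finset.mul_sum, Finset.sum_mul, Algebra.TensorProduct.tmul_mul_tmul,
    one_mul, mul_one, ← Finset.sum_neg_distrib, ← TensorProduct.neg_tmul, lowered_eq_ι, basisVec]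
  exact Finset.sum_congr rfl fun b _ => by rw [ι_mul_ι_swap]

variable {s}

lemma antiOp_antiOp_genericElt
    (hs : ∀ a b c, (s a * s b + s b * s a) * s c - s c * (s a * s b + s b * s a) =
      -(g a c • s b) - g b c • s a) (n : ι) :
    antiOp (genericElt s) (antiOp (genericElt s) (1 ⊗ₜ s n)) =
      (bivector g ⊗ₜ 1) * (1 ⊗ₜ s n) + (lowered g n ⊗ₜ 1) * genericElt s := by
  have h1 : antiOp (genericElt s) (1 ⊗ₜ s n) =
      ∑ b, basisVec b ⊗ₜ[ℚ] (s n * s b + s b * s n) := by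
    simp [antiOp_apply, genericElt, Finset.mul_sum, Finset.sum_mul, ← Finset.sum_add_distrib,
      TensorProduct.tmul_add]
  have h2 : ∀ b c, (basisVec b ⊗ₜ[ℚ] (s n * s b + s b * s n)) * (basisVec c ⊗ₜ[ℚ] s c) +
      (basisVec c ⊗ₜ[ℚ] s c) * (basisVec b ⊗ₜ[ℚ] (s n * s b + s b * s n)) =
      ((g n c • basisVec c) * basisVec b) ⊗ₜ[ℚ] s b
        - (basisVec b * (g b c • basisVec c)) ⊗ₜ[ℚ] s n := fun b c => by
    have hsw : (basisVec c * basisVec b : ExteriorAlgebra ℚ (ι → ℚ)) = -(basisVec b * basisVec c) :=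
      ι_mul_ι_swap _ _
    rw [Algebra.TensorProduct.tmul_mul_tmul, Algebra.TensorProduct.tmul_mul_tmul, smul_mul_assoc,
      hsw, TensorProduct.neg_tmul, ← sub_eq_add_neg, ← TensorProduct.tmul_sub, hs,
      TensorProduct.tmul_sub, TensorProduct.tmul_neg, smul_neg, TensorProduct.neg_tmul,
      mul_smul_comm, ← TensorProduct.smul_tmul, ← TensorProduct.smul_tmul]
  have h3 : (bivector g ⊗ₜ 1) * (1 ⊗ₜ s n) + (lowered g n ⊗ₜ 1) * genericElt s =
      ∑ b, ∑ c, (((g n c • basisVec c) * basisVec b) ⊗ₜ[ℚ] s b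
        - (basisVec b * (g b c • basisVec c)) ⊗ₜ[ℚ] s n) := by
    simp only [bivector, lowered, genericElt, Algebra.TensorProduct.tmul_mul_tmul, mul_one, one_mul,
      neg_mul, Finset.mul_sum, Finset.sum_mul, Finset.sum_sub_distrib, TensorProduct.neg_tmul,
      TensorProduct.sum_tmul]
    abel
  rw [h3, h1, antiOp_apply, genericElt, Finset.sum_mul_sum, Finset.sum_mul_sum]
  rw [Finset.sum_comm (f := fun i j => (basisVec i ⊗ₜ[ℚ] s i) * _)]
  simp only [← Finset.sum_add_distrib, h2]

/-- Applying `slice (coeffList l)` to a suitable correction of `genericElt s ^ P` gives an element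
whose twisted commutator with `s k` vanishes. -/
lemma exists_slice_twisted_comm_eq_zero (hg : ∀ a b, g a b = -g b a)
    (hs : ∀ a b c, (s a * s b + s b * s a) * s c - s c * (s a * s b + s b * s a) =
      -(g a c • s b) - g b c • s a) {l : List ι} {k : ι} (hk : k ∈ l) (P : ℕ) :
    ∃ F, F - genericElt s ^ P ∈ Submodule.span ℚ {z | ∃ m q, 2 * (m + 1) + q = P ∧
        z = (bivector g ⊗ₜ 1) ^ (m + 1) * genericElt s ^ q} ∧
      s k * slice (coeffList l) F + (-1 : ℚ) ^ P • (slice (coeffList l) F * s k) = 0 := by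
  have hI : ∀ z : ExteriorAlgebra ℚ (ι → ℚ) ⊗[ℚ] A,
      slice (coeffList l) (contractTensor k z) = 0 := fun z => by
    induction z using TensorProduct.induction_on with
    | zero => simp
    | tmul x y => rw [contractTensor, LinearMap.rTensor_tmul, slice_tmul, coeffList_contract hk,
        zero_smul]
    | add x y hx hy => rw [map_add, map_add, hx, hy, add_zero]
  obtain ⟨F, hF, h⟩ := exists_twisted_comm_eq_zero (X := genericElt s) (τ := 1 ⊗ₜ s k)
    (θ := lowered g k ⊗ₜ 1) (G := bivector g ⊗ₜ 1) bivector_tmul_one_mul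
    (lowered_tmul_one_mul_genericElt s k) (antiOp_antiOp_genericElt hs k) (contractTensor k)
    (contractTensor_genericElt_mul s k) (contractTensor_one k) (contractTensor_bivector_mul hg k)
    (slice (coeffList l)) hI P
  refine ⟨F, hF, ?_⟩
  simpa only [map_add, map_smul, slice_one_tmul_mul, slice_mul_one_tmul] using h

/-- The even generators act on polynomials in the bivector and the generic element by a
derivation of the exterior algebra. -/
lemma comm_bivector_pow_mul_genericElt_pow (hg : ∀ a b, g a b = -g b a)
    (hs : ∀ a b c, (s a * s b + s b * s a) * s c - s c * (s a * s b + s b * s a) =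
      -(g a c • s b) - g b c • s a) (a b : ι) (m q : ℕ) :
    (1 ⊗ₜ (s a * s b + s b * s a)) * ((bivector g ⊗ₜ 1) ^ m * genericElt s ^ q)
      - ((bivector g ⊗ₜ 1) ^ m * genericElt s ^ q) * (1 ⊗ₜ (s a * s b + s b * s a)) =
    -((lowered g a ⊗ₜ 1) * contractTensor b ((bivector g ⊗ₜ 1) ^ m * genericElt s ^ q))
      - (lowered g b ⊗ₜ 1) * contractTensor a ((bivector g ⊗ₜ 1) ^ m * genericElt s ^ q) := by
  set K : ExteriorAlgebra ℚ (ι → ℚ) ⊗[ℚ] A := 1 ⊗ₜ (s a * s b + s b * s a) with hK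
  set X := genericElt s with hX
  set G : ExteriorAlgebra ℚ (ι → ℚ) ⊗[ℚ] A := bivector g ⊗ₜ 1 with hG
  set α : ExteriorAlgebra ℚ (ι → ℚ) ⊗[ℚ] A := lowered g a ⊗ₜ 1 with hα
  set β : ExteriorAlgebra ℚ (ι → ℚ) ⊗[ℚ] A := lowered g b ⊗ₜ 1 with hβ
  have hαX : α * X = -(X * α) := lowered_tmul_one_mul_genericElt s a
  have hβX : β * X = -(X * β) := lowered_tmul_one_mul_genericElt s b
  have hGc : ∀ z, G * z = z * G := bivector_tmul_one_mul
  have hαβ : α * β = -(β * α) := by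
    simp only [hα, hβ, Algebra.TensorProduct.tmul_mul_tmul, lowered_eq_ι, ι_mul_ι_swap (g a) (g b),
      TensorProduct.neg_tmul]
  have hKX : K * X - X * K = -(α * (1 ⊗ₜ s b)) - β * (1 ⊗ₜ s a) := by
    simp only [hK, hX, hα, hβ, genericElt, Finset.mul_sum, Finset.sum_mul, lowered,
      Algebra.TensorProduct.tmul_mul_tmul, one_mul, mul_one, TensorProduct.sum_tmul,
      ← Finset.sum_sub_distrib, ← Finset.sum_neg_distrib, ← TensorProduct.tmul_sub, hs,
      TensorProduct.smul_tmul, smul_mul_assoc]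
    simp only [TensorProduct.tmul_sub, TensorProduct.tmul_neg]
  induction m with
  | zero =>
    induction q with
    | zero => simp [contractTensor_one]
    | succ q ih =>
      rw [_root_.pow_zero, one_mul] at ih ⊢
      rw [_root_.pow_succ', contractTensor_genericElt_mul, contractTensor_genericElt_mul]
      have e : K * (X * X ^ q) - X * X ^ q * K =
          (K * X - X * K) * X ^ q + X * (K * X ^ q - X ^ q * K) := by noncomm_ring
      rw [e, hKX, ih, mul_sub α, mul_sub β, ← mul_assoc α X, ← mul_assoc β X, hαX, hβX]
      noncomm_ring
  | succ m ih =>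
    rw [_root_.pow_succ', mul_assoc G, contractTensor_bivector_mul hg,
      contractTensor_bivector_mul hg]
    set w := G ^ m * X ^ q
    have e : K * (G * w) - G * w * K = G * (K * w - w * K) := by
      rw [← mul_assoc, ← hGc K]; noncomm_ring
    rw [e, ih, mul_add, mul_add, mul_smul_comm, mul_smul_comm, ← mul_assoc α β, hαβ,
      ← mul_assoc α G, ← hGc α, ← mul_assoc β G, ← hGc β]
    simp only [mul_sub, mul_neg, neg_mul, mul_assoc, smul_neg]
    abel

lemma slice_lowered_mul_contractTensor {l : List ι} {a b : ι}
    (h : ∀ c, g a c ≠ 0 → b ≠ c ∧ (b ∈ l ∨ c ∉ l)) (z : ExteriorAlgebra ℚ (ι → ℚ) ⊗[ℚ] A) :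
    slice (coeffList l) ((lowered g a ⊗ₜ 1) * contractTensor b z) = 0 := by
  induction z using TensorProduct.induction_on with
  | zero => simp
  | tmul x y =>
    rw [contractTensor, LinearMap.rTensor_tmul, Algebra.TensorProduct.tmul_mul_tmul, slice_tmul,
      lowered, Finset.sum_mul, map_sum, Finset.sum_eq_zero, zero_smul]
    intro c _
    rw [smul_mul_assoc, map_smul]
    by_cases hc : g a c = 0
    · rw [hc, zero_smul]
    · rw [coeffList_basisVec_mul_contract (h c hc).1 (h c hc).2, smul_zero]
  | add x y hx hy => rw [map_add, mul_add, map_add, hx, hy, add_zero]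

lemma comm_slice_eq (hg : ∀ a b, g a b = -g b a)
    (hs : ∀ a b c, (s a * s b + s b * s a) * s c - s c * (s a * s b + s b * s a) =
      -(g a c • s b) - g b c • s a) {l : List ι} {a b : ι}
    (ha : ∀ c, g a c ≠ 0 → b ≠ c ∧ (b ∈ l ∨ c ∉ l))
    (hb : ∀ c, g b c ≠ 0 → a ≠ c ∧ (a ∈ l ∨ c ∉ l)) {F : ExteriorAlgebra ℚ (ι → ℚ) ⊗[ℚ] A}
    (hF : F ∈ Submodule.span ℚ
      {z | ∃ m q, z = (bivector g ⊗ₜ 1) ^ m * genericElt s ^ q}) :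
    (s a * s b + s b * s a) * slice (coeffList l) F =
      slice (coeffList l) F * (s a * s b + s b * s a) := by
  induction hF using Submodule.span_induction with
  | mem z hz =>
    obtain ⟨m, q, rfl⟩ := hz
    rw [← slice_one_tmul_mul, ← slice_mul_one_tmul, ← sub_eq_zero, ← map_sub,
      comm_bivector_pow_mul_genericElt_pow hg hs, map_sub, map_neg,
      slice_lowered_mul_contractTensor ha, slice_lowered_mul_contractTensor hb, neg_zero, sub_zero]
  | zero => simp
  | add x y _ _ hx hy =>
    rw [map_add, mul_add (s a * s b + s b * s a), add_mul (slice _ x) (slice _ y), hx, hy]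
  | smul r x _ hx => rw [map_smul, mul_smul_comm, smul_mul_assoc, hx]

lemma slice_bivector_pow_mul (ψ : ExteriorAlgebra ℚ (ι → ℚ) →ₗ[ℚ] ℚ) (m : ℕ)
    (z : ExteriorAlgebra ℚ (ι → ℚ) ⊗[ℚ] A) :
    slice ψ ((bivector g ⊗ₜ 1) ^ m * z) =
      slice (ψ ∘ₗ LinearMap.mulLeft ℚ (bivector g ^ m)) z := by
  induction z using TensorProduct.induction_on with
  | zero => simp
  | tmul x y => simp [slice_tmul]
  | add x y hx hy => rw [mul_add, map_add, map_add, hx, hy]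

end OspRelations

section HighestWeight

lemma gmat_antisymm (n : ℕ) (a b : Fin (2*n)) : gmat n a b = -gmat n b a := by
  unfold gmat
  split_ifs <;> first | omega | norm_num

lemma σ_relation (n : ℕ) (a b c : Fin (2*n)) :
    (σ n a * σ n b + σ n b * σ n a) * σ n c - σ n c * (σ n a * σ n b + σ n b * σ n a) =
      -(gmat n a c • σ n b) - gmat n b c • σ n a := by
  have h := RingQuot.mkAlgHom_rel ℚ (OspRel.rel a b c)
  simp only [map_sub, map_mul, map_add, ← Algebra.smul_def, map_smul] at h
  simp only [σ]
  rw [h]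
  abel

lemma gmat_ne_zero {n : ℕ} {a c : Fin (2*n)} (h : gmat n a c ≠ 0) :
    (c : ℕ) = a + n ∨ (a : ℕ) = c + n := by
  unfold gmat at h
  split_ifs at h with h1 h2
  · exact Or.inl h1.2
  · exact Or.inr h2.2
  · exact absurd rfl h

lemma mem_ofFn_hwTuple {n j : ℕ} (hj : j ≤ n) (c : Fin (2*n)) :
    c ∈ List.ofFn (hwTuple n j hj) ↔ (c : ℕ) < n ∨ j + n ≤ c := by
  have hc := c.isLt
  rw [List.mem_ofFn]
  constructor
  · rintro ⟨i, rfl⟩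
    have := i.isLt
    unfold hwTuple
    split_ifs <;> simp only <;> omega
  · intro h
    by_cases h1 : (c : ℕ) < j
    · refine ⟨⟨c, by omega⟩, ?_⟩
      simp [hwTuple, h1]
    · by_cases h2 : (c : ℕ) < n
      · refine ⟨⟨j + 2 * (c - j), by omega⟩, Fin.ext ?_⟩
        simp [hwTuple]
        omega
      · refine ⟨⟨j + 2 * (c - n - j) + 1, by omega⟩, Fin.ext ?_⟩
        rw [hwTuple, dif_neg (by simp only; omega), dif_neg (by simp only; omega)]
        simp only
        omega

lemma lowBrkt_le_Omega (n N : ℕ) : lowBrkt n N ≤ Omega n :=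
  Submodule.span_mono (by rintro _ ⟨p, _, a, rfl⟩; exact ⟨p, a, rfl⟩)

lemma slice_sub_mem_lowBrkt {n P : ℕ} {l : List (Fin (2*n))}
    {z : ExteriorAlgebra ℚ (Fin (2*n) → ℚ) ⊗[ℚ] U n}
    (hz : z ∈ Submodule.span ℚ {z | ∃ m q, 2 * (m + 1) + q = P ∧
        z = (bivector (gmat n) ⊗ₜ 1) ^ (m + 1) * genericElt (σ n) ^ q}) :
    slice (coeffList l) z ∈ lowBrkt n P := by
  refine (Submodule.span_le (p := (lowBrkt n P).comap (slice (coeffList l)))).2 ?_ hz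
  rintro _ ⟨m, q, h, rfl⟩
  rw [SetLike.mem_coe, Submodule.mem_comap, slice_bivector_pow_mul]
  refine Submodule.span_mono ?_ (slice_genericElt_pow_mem (σ n) _ q)
  rintro _ ⟨a, rfl⟩
  exact ⟨q, by omega, a, rfl⟩

end HighestWeight

/-- For each `0 ≤ j ≤ n` there is a highest weight vector `v_j ∈ Ω` for the
nonstandard action: `v_j` equals `[t_j]` up to lower-order antisymmetrized monomials, commutes
with the simple root generators `σ_{α,\bar{α+1}} = σ_α σ_{\bar{α+1}} + σ_{\bar{α+1}} σ_α`
(`1 ≤ α ≤ n−1`), and satisfies `σ_n ▷ v_j = 0`, i.e.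
`σ_n v_j + (−1)^{len(t_j)} v_j σ_n = 0`. -/
theorem stmt16 (n : ℕ) (hn : 1 ≤ n) (j : ℕ) (hj : j ≤ n) :
    ∃ v ∈ Omega n,
      (v - brkt n (j + 2*(n-j)) (hwTuple n j hj) ∈ lowBrkt n (j + 2*(n-j))) ∧
      (∀ (α : ℕ) (hα : α + 1 < n),
        σσ n ⟨α, by omega⟩ ⟨α + 1 + n, by omega⟩ * v
          = v * σσ n ⟨α, by omega⟩ ⟨α + 1 + n, by omega⟩) ∧
      (σ n ⟨n - 1, by omega⟩ * v
        + ((-1 : ℚ)^(j + 2*(n-j))) • (v * σ n ⟨n - 1, by omega⟩) = 0) := by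
  obtain ⟨F, hF, hcomm⟩ := exists_slice_twisted_comm_eq_zero (gmat_antisymm n) (σ_relation n)
    ((mem_ofFn_hwTuple hj ⟨n - 1, by omega⟩).2 (Or.inl (by simp only; omega))) (j + 2*(n-j))
  have hlow : slice (coeffList (List.ofFn (hwTuple n j hj))) F
      - brkt n (j + 2*(n-j)) (hwTuple n j hj) ∈ lowBrkt n (j + 2*(n-j)) := by
    have h := slice_sub_mem_lowBrkt (l := List.ofFn (hwTuple n j hj)) hF
    rwa [map_sub, slice_coeffList_genericElt_pow] at h
  refine ⟨slice (coeffList (List.ofFn (hwTuple n j hj))) F, ?_, hlow, fun α hα => ?_, hcomm⟩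
  · rw [← sub_add_cancel (slice _ F) (brkt n (j + 2*(n-j)) (hwTuple n j hj))]
    exact add_mem (lowBrkt_le_Omega _ _ hlow) (Submodule.subset_span ⟨_, _, rfl⟩)
  · refine comm_slice_eq (gmat_antisymm n) (σ_relation n) (fun c hc => ?_) (fun c hc => ?_)
      (?_ : F ∈ _)
    · have := gmat_ne_zero hc
      have := c.isLt
      simp only [mem_ofFn_hwTuple, ne_eq, Fin.ext_iff] at *
      omega
    · have := gmat_ne_zero hc
      have := c.isLt
      simp only [mem_ofFn_hwTuple, ne_eq, Fin.ext_iff] at *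
      omega
    · rw [← sub_add_cancel F (genericElt (σ n) ^ (j + 2*(n-j)))]
      refine add_mem (Submodule.span_mono ?_ hF) (Submodule.subset_span ⟨0, j + 2*(n-j), by simp⟩)
      rintro _ ⟨m, q, _, rfl⟩
      exact ⟨m + 1, q, rfl⟩

end
end

section
/- For d ≥ 0, let B_d ⊆ U_n be the ℚ-linear span of all products of at most d bosonic generators σ_{ab} := σ_a σ_b + σ_b σ_a, and let V_d ⊆ U_n be the ℚ-linear span of all products b·ω with b ∈ B_d and ω ∈ Ω. Then V_d is stable under the nonstandard action: (i) σ_{bc} x − x σ_{bc} ∈ V_d for all 1 ≤ b, c ≤ 2n and all x ∈ V_d; (ii) for every 1 ≤ a ≤ 2n and every x ∈ V_d lying in the span of elements b·[a_1 … a_p] with b ∈ B_d and p even (resp. p odd), one has σ_a x + x σ_a ∈ V_d (resp. σ_a x − x σ_a ∈ V_d). (Hence U(osp(1|2n)) splits into finite dimensional modules under the nonstandard action.) -/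
open scoped BigOperators TensorProduct
open Nat

noncomputable section

/-- `B_d`, the span of all products of at most `d` bosonic generators `σ_{ab}`. -/
def Bfil (n d : ℕ) : Submodule ℚ (U n) :=
  Submodule.span ℚ {x | ∃ l : List (Fin (2*n) × Fin (2*n)),
    l.length ≤ d ∧ x = (l.map fun q => σσ n q.1 q.2).prod}

/-- `V_d`, the span of all products `b·ω` with `b ∈ B_d` and `ω ∈ Ω`. -/
def Vfil (n d : ℕ) : Submodule ℚ (U n) :=
  Submodule.span ℚ {x | ∃ b ∈ Bfil n d, ∃ w ∈ Omega n, x = b * w}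

/-- The span of all products `b·[a₁ … a_p]` with `b ∈ B_d` and `p ≡ r (mod 2)`. -/
def VfilPar (n d r : ℕ) : Submodule ℚ (U n) :=
  Submodule.span ℚ {x | ∃ b ∈ Bfil n d, ∃ p, p % 2 = r ∧
    ∃ a : Fin p → Fin (2*n), x = b * brkt n p a}

section AnticommutatorRecursion

variable {A : Type*} [Ring A] [Algebra ℚ A]

/-- Half of the anticommutator with `X`. -/
def halfAnticomm (X : A) : Module.End ℚ A :=
  (2⁻¹ : ℚ) • (LinearMap.mulRight ℚ X + LinearMap.mulLeft ℚ X)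

lemma halfAnticomm_apply (X y : A) :
    halfAnticomm X y = (2⁻¹ : ℚ) • (y * X + X * y) := rfl

lemma halfAnticomm_pow_mul {X c : A} (hc : c * X = X * c) (j : ℕ) (y : A) :
    (halfAnticomm X ^ j) (c * y) = c * (halfAnticomm X ^ j) y := by
  induction j generalizing y with
  | zero => simp
  | succ j ih =>
    rw [pow_succ, Module.End.mul_apply, Module.End.mul_apply, ← ih, halfAnticomm_apply,
      halfAnticomm_apply, mul_smul_comm, mul_add, ← mul_assoc X c y, ← hc, mul_assoc, mul_assoc]

lemma halfAnticomm_pow_pow (X : A) (j k : ℕ) :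
    (halfAnticomm X ^ j) (X ^ k) = X ^ (j + k) := by
  induction j generalizing k with
  | zero => simp
  | succ j ih =>
    have h : halfAnticomm X (X ^ k) = X ^ (k + 1) := by
      rw [halfAnticomm_apply, ← pow_succ, ← _root_.pow_succ', ← two_smul ℚ, smul_smul]
      norm_num
    rw [pow_succ, Module.End.mul_apply, h, ih]
    congr 1
    omega

/-- The elements that `M ^ j` sends into `W` as soon as `W` contains `M ^ q z` for
all `q < p + j`. -/
def lowerOrder (W : Submodule ℚ A) (M : Module.End ℚ A) (z : A) (p : ℕ) : Submodule ℚ A where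
  carrier := {x | ∀ j, (∀ q < p + j, (M ^ q) z ∈ W) → (M ^ j) x ∈ W}
  add_mem' hx hy j h := by
    rw [map_add]
    exact W.add_mem (hx j h) (hy j h)
  zero_mem' j h := by simp
  smul_mem' c x hx j h := by
    rw [map_smul]
    exact W.smul_mem c (hx j h)

variable {W : Submodule ℚ A} {X z Γ δ : A} {P : ℕ → A}

lemma lowerOrder_mono {M : Module.End ℚ A} {p q : ℕ} (h : p ≤ q) :
    lowerOrder W M z p ≤ lowerOrder W M z q :=
  fun _ hx j hj => hx j fun r hr => hj r (by omega)

lemma map_mem_lowerOrder {M : Module.End ℚ A} {p : ℕ} {x : A} (hx : x ∈ lowerOrder W M z p) :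
    M x ∈ lowerOrder W M z (p + 1) := by
  intro j hj
  rw [← Module.End.mul_apply, ← pow_succ]
  exact hx (j + 1) fun r hr => hj r (by omega)

lemma pow_apply_mem_lowerOrder (M : Module.End ℚ A) {p q : ℕ} (h : q < p) :
    (M ^ q) z ∈ lowerOrder W M z p := by
  intro j hj
  rw [← Module.End.mul_apply, ← pow_add]
  exact hj _ (by omega)

omit [Algebra ℚ A] in
lemma commutator_sum_pow (hP0 : P 0 = z) (hP : ∀ p, P (p + 1) = P p * X + X ^ (p + 1) * z)
    (p : ℕ) : P p * X - X * P p = z * X ^ (p + 1) - X ^ (p + 1) * z := by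
  induction p with
  | zero => simp [hP0]
  | succ p ih =>
    have e : P (p + 1) * X - X * P (p + 1)
        = (P p * X - X * P p) * X + X ^ (p + 1) * z * X - X ^ (p + 2) * z := by
      rw [hP, _root_.pow_succ' X (p + 1)]
      noncomm_ring
    rw [e, ih, pow_succ X (p + 1)]
    noncomm_ring

lemma double_commutator_sum_pow (hP0 : P 0 = z)
    (hP : ∀ p, P (p + 1) = P p * X + X ^ (p + 1) * z)
    (hΓ : Γ * X = X * Γ) (hδ : δ * X = X * δ)
    (hz : (z * X - X * z) * X - X * (z * X - X * z) = Γ * z + δ * X) (p : ℕ) :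
    (P p * X - X * P p) * X - X * (P p * X - X * P p)
      = Γ * P p + ((p : ℚ) + 1) • (δ * X ^ (p + 1)) := by
  induction p with
  | zero => simp [hP0, hz]
  | succ p ih =>
    have hΓ' : X ^ (p + 1) * Γ = Γ * X ^ (p + 1) :=
      ((Commute.pow_right (show Commute Γ X from hΓ) (p + 1)).eq).symm
    have hδ' : X ^ (p + 1) * δ = δ * X ^ (p + 1) :=
      ((Commute.pow_right (show Commute δ X from hδ) (p + 1)).eq).symm
    have hX : X * X ^ (p + 1) = X ^ (p + 1) * X := by rw [← pow_succ, ← _root_.pow_succ']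
    have e : (P (p + 1) * X - X * P (p + 1)) * X - X * (P (p + 1) * X - X * P (p + 1))
        = ((P p * X - X * P p) * X - X * (P p * X - X * P p)) * X
          + X ^ (p + 1) * ((z * X - X * z) * X - X * (z * X - X * z)) := by
      have h2 : X * (X * X ^ (p + 1)) = X ^ (p + 1) * (X * X) := by
        rw [hX, ← mul_assoc, hX, mul_assoc]
      rw [hP]
      have h3 : X * (X * (X ^ (p + 1) * z)) = X ^ (p + 1) * (X * (X * z)) := by
        rw [← mul_assoc X (X ^ (p + 1)), ← mul_assoc X, h2]
        simp only [mul_assoc]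
      have h4 : X * (X ^ (p + 1) * (z * X)) = X ^ (p + 1) * (X * (z * X)) := by
        rw [← mul_assoc, hX, mul_assoc]
      simp only [mul_add, add_mul, mul_sub, sub_mul, mul_assoc, h3, h4]
      abel
    rw [e, ih, hz, hP, mul_add, ← mul_assoc (X ^ (p + 1)), ← mul_assoc (X ^ (p + 1)), hΓ', hδ',
      add_mul, smul_mul_assoc, mul_add]
    simp only [mul_assoc, ← pow_succ]
    push_cast
    module

/-- If `X` has quadratic double commutator with `z`, then a submodule containing the powers of `X`
and the first order variations `P p = ∑ k, X ^ k * z * X ^ (p - k)` of these powers contains the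
anticommutators of `z` with the powers of `X`. -/
lemma anticommutator_pow_mem (hP0 : P 0 = z) (hP : ∀ p, P (p + 1) = P p * X + X ^ (p + 1) * z)
    (hΓ : Γ * X = X * Γ) (hδ : δ * X = X * δ)
    (hz : (z * X - X * z) * X - X * (z * X - X * z) = Γ * z + δ * X)
    (hWΓ : ∀ w ∈ W, Γ * w ∈ W) (hWδ : ∀ w ∈ W, δ * w ∈ W)
    (hWX : ∀ k, X ^ k ∈ W) (hWP : ∀ p, P p ∈ W) (p : ℕ) :
    z * X ^ p + X ^ p * z ∈ W := by
  set M := halfAnticomm X with hM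
  set N := lowerOrder W M z with hN
  have hNΓ : ∀ p, ∀ x ∈ N p, Γ * x ∈ N p := by
    intro p x hx j hj
    rw [hM, halfAnticomm_pow_mul hΓ]
    exact hWΓ _ (hx j hj)
  have hNδ : ∀ p k, δ * X ^ k ∈ N p := by
    intro p k j hj
    rw [hM, halfAnticomm_pow_mul hδ, halfAnticomm_pow_pow]
    exact hWδ _ (hWX _)
  have key : ∀ p : ℕ, z * X ^ p + X ^ p * z - (2 : ℚ) • (M ^ p) z ∈ N p ∧
      P p - ((p : ℚ) + 1) • (M ^ p) z ∈ N p ∧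
      (z * X ^ p - X ^ p * z) * X - X * (z * X ^ p - X ^ p * z) ∈ N p := by
    intro p
    induction p with
    | zero =>
      refine ⟨?_, ?_, ?_⟩
      · simp [two_smul]
      · simp [hP0]
      · simp
    | succ p ih =>
      obtain ⟨h1, h2, h3⟩ := ih
      have hJ : z * X ^ (p + 1) + X ^ (p + 1) * z - (2 : ℚ) • (M ^ (p + 1)) z ∈ N (p + 1) := by
        have e : z * X ^ (p + 1) + X ^ (p + 1) * z - (2 : ℚ) • (M ^ (p + 1)) z
            = M (z * X ^ p + X ^ p * z - (2 : ℚ) • (M ^ p) z)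
              + (2⁻¹ : ℚ) • ((z * X ^ p - X ^ p * z) * X - X * (z * X ^ p - X ^ p * z)) := by
          have h : X * (X ^ p * z) = X ^ (p + 1) * z := by rw [_root_.pow_succ', mul_assoc]
          have h' : z * X ^ p * X = z * X ^ (p + 1) := by rw [pow_succ, mul_assoc]
          rw [map_sub, map_smul, _root_.pow_succ' M, Module.End.mul_apply, hM,
            halfAnticomm_apply X (_ + _)]
          simp only [mul_add, add_mul, mul_sub, sub_mul, h, h']
          module
        rw [e]
        exact (N (p + 1)).add_mem (map_mem_lowerOrder h1)
          ((N (p + 1)).smul_mem _ (lowerOrder_mono (Nat.le_succ p) h3))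
      refine ⟨hJ, ?_, ?_⟩
      · have e : P (p + 1) - (((p + 1 : ℕ) : ℚ) + 1) • (M ^ (p + 1)) z
            = M (P p - ((p : ℚ) + 1) • (M ^ p) z)
              + (2⁻¹ : ℚ) • (z * X ^ (p + 1) + X ^ (p + 1) * z - (2 : ℚ) • (M ^ (p + 1)) z) := by
          have h : z * X ^ (p + 1) = P p * X - X * P p + X ^ (p + 1) * z := by
            rw [commutator_sum_pow hP0 hP]
            abel
          rw [map_sub, map_smul, _root_.pow_succ' M, Module.End.mul_apply, h, hP, hM,
            halfAnticomm_apply X (P p)]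
          push_cast
          module
        rw [e]
        exact (N (p + 1)).add_mem (map_mem_lowerOrder h2) ((N (p + 1)).smul_mem _ hJ)
      · rw [← commutator_sum_pow hP0 hP, double_commutator_sum_pow hP0 hP hΓ hδ hz]
        refine (N (p + 1)).add_mem (hNΓ _ _ ?_) ((N (p + 1)).smul_mem _ (hNδ _ _))
        have := (N (p + 1)).add_mem (lowerOrder_mono (Nat.le_succ p) h2)
          ((N (p + 1)).smul_mem ((p : ℚ) + 1) (pow_apply_mem_lowerOrder M (Nat.lt_succ_self p)))
        simpa using this
  have hMz : ∀ p, (M ^ p) z ∈ W := by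
    intro p
    induction p using Nat.strong_induction_on with
    | _ p ih =>
      have h : P p - ((p : ℚ) + 1) • (M ^ p) z ∈ W := (key p).2.1 0 ih
      have h' := W.smul_mem ((p : ℚ) + 1)⁻¹ (W.sub_mem (hWP p) h)
      have hp : (p : ℚ) + 1 ≠ 0 := by positivity
      rwa [sub_sub_cancel, smul_smul, inv_mul_cancel₀ hp, one_smul] at h'
  have h : z * X ^ p + X ^ p * z - (2 : ℚ) • (M ^ p) z ∈ W := (key p).1 0 fun q _ => hMz q
  have := W.add_mem h (W.smul_mem 2 (hMz p))
  rwa [sub_add_cancel] at this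

lemma mul_pow_mem_of_anticommutator_mem (hΓ : Γ * X = X * Γ) (hδ : δ * X = X * δ)
    (hz : (z * X - X * z) * X - X * (z * X - X * z) = Γ * z + δ * X)
    (hWΓ : ∀ w ∈ W, Γ * w ∈ W) (hWδ : ∀ k, δ * X ^ k ∈ W)
    (hWY : ∀ k, (z * X - X * z) * X ^ k ∈ W)
    (hJ : ∀ p, z * X ^ p + X ^ p * z ∈ W) (p : ℕ) : z * X ^ p ∈ W := by
  suffices h : ∀ p, (∀ k l, k + l = p → X ^ k * z * X ^ l ∈ W) ∧
      ∀ k l, k + l = p → X ^ k * (z * X - X * z) * X ^ l ∈ W by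
    simpa using (h p).1 0 p (by simp)
  intro p
  induction p with
  | zero =>
    constructor
    · intro k l h
      obtain ⟨rfl, rfl⟩ : k = 0 ∧ l = 0 := by omega
      have := W.smul_mem (2⁻¹ : ℚ) (hJ 0)
      rw [pow_zero, mul_one, one_mul, ← two_smul ℚ, smul_smul] at this
      simpa using this
    · intro k l h
      obtain ⟨rfl, rfl⟩ : k = 0 ∧ l = 0 := by omega
      simpa using hWY 0
  | succ p ih =>
    obtain ⟨ihz, ihY⟩ := ih
    have hdiff : ∀ k l, k + l = p + 1 → z * X ^ (p + 1) - X ^ k * z * X ^ l ∈ W := by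
      intro k
      induction k with
      | zero =>
        intro l h
        obtain rfl : l = p + 1 := by omega
        simp
      | succ k ihk =>
        intro l h
        have e : z * X ^ (p + 1) - X ^ (k + 1) * z * X ^ l
            = (z * X ^ (p + 1) - X ^ k * z * X ^ (l + 1))
              + X ^ k * (z * X - X * z) * X ^ l := by
          rw [pow_succ X k, _root_.pow_succ' X l]
          noncomm_ring
        rw [e]
        exact W.add_mem (ihk (l + 1) (by omega)) (ihY k l (by omega))
    have hzX : z * X ^ (p + 1) ∈ W := by
      have h := W.add_mem (hdiff (p + 1) 0 (by simp)) (hJ (p + 1))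
      have h' := W.smul_mem (2⁻¹ : ℚ) h
      rw [pow_zero, mul_one, sub_add_add_cancel, ← two_smul ℚ, smul_smul] at h'
      simpa using h'
    constructor
    · intro k l h
      simpa using W.sub_mem hzX (hdiff k l h)
    · intro k
      induction k with
      | zero =>
        intro l h
        simpa using hWY l
      | succ k ihk =>
        intro l h
        have hΓ' : X ^ k * Γ = Γ * X ^ k :=
          ((Commute.pow_right (show Commute Γ X from hΓ) k).eq).symm
        have hδ' : X ^ k * δ = δ * X ^ k :=
          ((Commute.pow_right (show Commute δ X from hδ) k).eq).symm
        have e : X ^ (k + 1) * (z * X - X * z) * X ^ l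
            = X ^ k * (z * X - X * z) * X ^ (l + 1)
              - (Γ * (X ^ k * z * X ^ l) + δ * X ^ (k + 1 + l)) := by
          have h1 : Γ * (X ^ k * z * X ^ l) + δ * X ^ (k + 1 + l)
              = X ^ k * (Γ * z + δ * X) * X ^ l := by
            simp only [add_mul, mul_add, ← mul_assoc, hΓ', hδ', pow_add, pow_one]
          rw [h1, ← hz, pow_succ X k, _root_.pow_succ' X l]
          noncomm_ring
        rw [e]
        exact W.sub_mem (ihk (l + 1) (by omega))
          (W.add_mem (hWΓ _ (ihz k l (by omega))) (hWδ _))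

end AnticommutatorRecursion

section Antisymmetrization

open ExteriorAlgebra

variable {B : Type*} [Ring B] [Algebra ℚ B]

/-- The antisymmetrized product of a tuple. -/
def antisymProd {p : ℕ} (x : Fin p → B) : B :=
  ∑ s : Equiv.Perm (Fin p), (Equiv.Perm.sign s : ℤ) • (List.ofFn fun i => x (s i)).prod

variable {V : Type*} [AddCommGroup V] [Module ℚ V]

lemma prod_ofFn_tmul {C : Type*} [Ring C] [Algebra ℚ C] {p : ℕ} (c : Fin p → C) (x : Fin p → B) :
    (List.ofFn fun i => c i ⊗ₜ[ℚ] x i).prod = (List.ofFn c).prod ⊗ₜ[ℚ] (List.ofFn x).prod := by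
  induction p with
  | zero => simp [Algebra.TensorProduct.one_def]
  | succ p ih => simp [List.ofFn_succ, ih]

lemma grassmann_sum_pow {κ : Type*} [Fintype κ] (v : κ → V) (x : κ → B) (p : ℕ) :
    (∑ i, ι ℚ (v i) ⊗ₜ[ℚ] x i) ^ p
      = ∑ f : Fin p → κ, ιMulti ℚ p (v ∘ f) ⊗ₜ[ℚ] (List.ofFn (x ∘ f)).prod := by
  classical
  have h := (MultilinearMap.mkPiAlgebraFin ℚ p (ExteriorAlgebra ℚ V ⊗[ℚ] B)).map_sum
    (fun (_ : Fin p) (i : κ) => ι ℚ (v i) ⊗ₜ[ℚ] x i)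
  simp only [MultilinearMap.mkPiAlgebraFin_apply, prod_ofFn_tmul, List.ofFn_const,
    List.prod_replicate] at h
  rw [h]
  rfl

/-- The elements of `ExteriorAlgebra ℚ V ⊗ B` with coefficients in `W`. -/
def grassmannSpan (V : Type*) [AddCommGroup V] [Module ℚ V] (W : Submodule ℚ B) :
    Submodule ℚ (ExteriorAlgebra ℚ V ⊗[ℚ] B) :=
  Submodule.span ℚ {y | ∃ c, ∃ w ∈ W, y = c ⊗ₜ[ℚ] w}

lemma tmul_mem_grassmannSpan {W : Submodule ℚ B} (c : ExteriorAlgebra ℚ V) {w : B} (hw : w ∈ W) :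
    c ⊗ₜ[ℚ] w ∈ grassmannSpan V W :=
  Submodule.subset_span ⟨c, w, hw, rfl⟩

lemma tmul_mul_mem_grassmannSpan {W W' : Submodule ℚ B} {b : B} (hb : ∀ w ∈ W, b * w ∈ W')
    (c : ExteriorAlgebra ℚ V) {y : ExteriorAlgebra ℚ V ⊗[ℚ] B} (hy : y ∈ grassmannSpan V W) :
    (c ⊗ₜ[ℚ] b) * y ∈ grassmannSpan V W' := by
  induction hy using Submodule.span_induction with
  | mem y hy =>
    obtain ⟨c', w, hw, rfl⟩ := hy
    rw [Algebra.TensorProduct.tmul_mul_tmul]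
    exact tmul_mem_grassmannSpan _ (hb w hw)
  | zero => simp
  | add y y' _ _ h h' =>
    rw [mul_add]
    exact Submodule.add_mem _ h h'
  | smul r y _ h =>
    rw [mul_smul_comm]
    exact Submodule.smul_mem _ r h

/-- Apply a functional on the exterior algebra to the left tensor factor. -/
def grassmannEval (ψ : ExteriorAlgebra ℚ V →ₗ[ℚ] ℚ) : ExteriorAlgebra ℚ V ⊗[ℚ] B →ₗ[ℚ] B :=
  (TensorProduct.lid ℚ B).toLinearMap ∘ₗ ψ.rTensor B

lemma grassmannEval_tmul (ψ : ExteriorAlgebra ℚ V →ₗ[ℚ] ℚ) (c : ExteriorAlgebra ℚ V) (b : B) :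
    grassmannEval ψ (c ⊗ₜ[ℚ] b) = ψ c • b := by
  simp [grassmannEval]

lemma grassmannEval_mem {W : Submodule ℚ B} (ψ : ExteriorAlgebra ℚ V →ₗ[ℚ] ℚ)
    {y : ExteriorAlgebra ℚ V ⊗[ℚ] B} (hy : y ∈ grassmannSpan V W) : grassmannEval ψ y ∈ W := by
  suffices h : grassmannSpan V W ≤ W.comap (grassmannEval ψ) from h hy
  refine Submodule.span_le.2 ?_
  rintro _ ⟨c, w, hw, rfl⟩
  simpa [grassmannEval_tmul] using W.smul_mem (ψ c) hw

lemma grassmannEval_tmul_mul (ψ : ExteriorAlgebra ℚ V →ₗ[ℚ] ℚ) (c : ExteriorAlgebra ℚ V) (b : B)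
    (y : ExteriorAlgebra ℚ V ⊗[ℚ] B) :
    grassmannEval ψ ((c ⊗ₜ[ℚ] b) * y) = b * grassmannEval (ψ ∘ₗ LinearMap.mulLeft ℚ c) y := by
  induction y using TensorProduct.induction_on with
  | zero => simp
  | tmul c' b' => simp [grassmannEval_tmul]
  | add y y' h h' => rw [mul_add, map_add, h, h', map_add, mul_add]

lemma grassmannEval_mul_tmul_one (ψ : ExteriorAlgebra ℚ V →ₗ[ℚ] ℚ) (b : B)
    (y : ExteriorAlgebra ℚ V ⊗[ℚ] B) :
    grassmannEval ψ (y * (1 ⊗ₜ[ℚ] b)) = grassmannEval ψ y * b := by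
  induction y using TensorProduct.induction_on with
  | zero => simp
  | tmul c' b' => simp [grassmannEval_tmul]
  | add y y' h h' => rw [add_mul, map_add, h, h', map_add, add_mul]

lemma sum_perm_comp {κ M : Type*} [Fintype κ] [AddCommMonoid M] {p : ℕ}
    (s : Equiv.Perm (Fin p)) (F : (Fin p → κ) → M) : ∑ f, F (f ∘ s) = ∑ f, F f :=
  Equiv.sum_comp (Equiv.arrowCongr s.symm (Equiv.refl κ)) F

lemma grassmann_sum_pow_mem {κ : Type*} [Fintype κ] {W : Submodule ℚ B} (v : κ → V) (x : κ → B)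
    (p : ℕ) (hW : ∀ f : Fin p → κ, antisymProd (x ∘ f) ∈ W) :
    (∑ i, ι ℚ (v i) ⊗ₜ[ℚ] x i) ^ p ∈ grassmannSpan V W := by
  have h : (p.factorial : ℚ) • (∑ i, ι ℚ (v i) ⊗ₜ[ℚ] x i) ^ p
      = ∑ f : Fin p → κ, ιMulti ℚ p (v ∘ f) ⊗ₜ[ℚ] antisymProd (x ∘ f) := by
    have hs : ∀ s : Equiv.Perm (Fin p), (∑ i, ι ℚ (v i) ⊗ₜ[ℚ] x i) ^ p
        = ∑ f : Fin p → κ, ιMulti ℚ p (v ∘ f) ⊗ₜ[ℚ]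
          ((Equiv.Perm.sign s : ℤ) • (List.ofFn fun i => (x ∘ f) (s i)).prod) := by
      intro s
      rw [grassmann_sum_pow, ← sum_perm_comp s]
      refine Finset.sum_congr rfl fun f _ => ?_
      have h1 := (ιMulti ℚ p).map_perm (v ∘ f) s
      rw [← Function.comp_assoc, h1, Units.smul_def, TensorProduct.smul_tmul]
      rfl
    have hc : (p.factorial : ℚ) • (∑ i, ι ℚ (v i) ⊗ₜ[ℚ] x i) ^ p
        = ∑ _s : Equiv.Perm (Fin p), (∑ i, ι ℚ (v i) ⊗ₜ[ℚ] x i) ^ p := by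
      rw [Finset.sum_const, Finset.card_univ, Fintype.card_perm, Fintype.card_fin,
        Nat.cast_smul_eq_nsmul]
    rw [hc, Finset.sum_congr rfl fun s _ => hs s, Finset.sum_comm]
    simp only [antisymProd, TensorProduct.tmul_sum]
  have h' : (p.factorial : ℚ) • (∑ i, ι ℚ (v i) ⊗ₜ[ℚ] x i) ^ p ∈ grassmannSpan V W := by
    rw [h]
    exact Submodule.sum_mem _ fun f _ => tmul_mem_grassmannSpan _ (hW f)
  exact (Submodule.smul_mem_iff _ (by exact_mod_cast p.factorial_ne_zero)).1 h'

lemma grassmannEval_sum_pow {p : ℕ} (ψ : ExteriorAlgebra ℚ V →ₗ[ℚ] ℚ) (v : Fin p → V)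
    (x : Fin p → B) :
    grassmannEval ψ ((∑ i, ι ℚ (v i) ⊗ₜ[ℚ] x i) ^ p) = ψ (ιMulti ℚ p v) • antisymProd x := by
  rw [grassmann_sum_pow, map_sum, antisymProd, Finset.smul_sum]
  refine (Fintype.sum_of_injective (fun (s : Equiv.Perm (Fin p)) => (s : Fin p → Fin p))
    DFunLike.coe_injective _ _ ?_ ?_).symm
  · intro f hf
    have hinj : ¬ Function.Injective (v ∘ f) := fun h => hf
      ⟨Equiv.ofBijective f (Finite.injective_iff_bijective.1 h.of_comp), rfl⟩
    rw [ιMulti_eq_zero_of_not_inj hinj, TensorProduct.zero_tmul, map_zero]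
  · intro s
    rw [(ιMulti ℚ p).map_perm v s, grassmannEval_tmul, Units.smul_def, map_zsmul, smul_assoc,
      smul_comm]
    rfl

lemma exists_top_functional (p : ℕ) :
    ∃ ψ : ExteriorAlgebra ℚ (Fin (p + 1) → ℚ) →ₗ[ℚ] ℚ,
      ψ (ι ℚ (Pi.single 0 1) * ιMulti ℚ p fun i => Pi.single i.succ 1) = 1 := by
  refine ⟨liftAlternating (Function.update 0 (p + 1) Matrix.detRowAlternating), ?_⟩
  have h : (ι ℚ (Pi.single 0 1) * ιMulti ℚ p fun i => Pi.single i.succ 1)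
      = ιMulti ℚ (p + 1) fun i : Fin (p + 1) => (Pi.single i 1 : Fin (p + 1) → ℚ) := by
    rw [ιMulti_succ_apply]
    rfl
  rw [h, liftAlternating_apply_ιMulti, Function.update_self]
  have h1 : (fun i : Fin (p + 1) => (Pi.single i 1 : Fin (p + 1) → ℚ))
      = (1 : Matrix (Fin (p + 1)) (Fin (p + 1)) ℚ) := by
    ext i j
    simp [Matrix.one_apply, Pi.single_apply, eq_comm]
  rw [h1]
  exact Matrix.det_one

end Antisymmetrization

section NonstandardAction

open ExteriorAlgebra

variable {B : Type*} [Ring B] [Algebra ℚ B] {V : Type*} [AddCommGroup V] [Module ℚ V]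

lemma ι_mul_ι_swap_s18 (u v : V) : ι ℚ u * ι ℚ v = -(ι ℚ v * ι ℚ u) :=
  eq_neg_of_add_eq_zero_left (ι_add_mul_swap u v)

lemma commute_ι_mul_ι (u v w : V) : Commute (ι ℚ u * ι ℚ v) (ι ℚ w) := by
  change ι ℚ u * ι ℚ v * ι ℚ w = ι ℚ w * (ι ℚ u * ι ℚ v)
  rw [mul_assoc, ι_mul_ι_swap_s18 v w, mul_neg, ← mul_assoc, ι_mul_ι_swap_s18 u w, neg_mul, neg_neg,
    mul_assoc]

variable {κ : Type*} [Fintype κ]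

lemma tmul_one_commute {c : ExteriorAlgebra ℚ V} (hc : ∀ w : V, Commute c (ι ℚ w))
    (v : κ → V) (x : κ → B) :
    (c ⊗ₜ[ℚ] (1 : B)) * ∑ i, ι ℚ (v i) ⊗ₜ[ℚ] x i
      = (∑ i, ι ℚ (v i) ⊗ₜ[ℚ] x i) * (c ⊗ₜ[ℚ] (1 : B)) := by
  rw [Finset.mul_sum, Finset.sum_mul]
  refine Finset.sum_congr rfl fun i _ => ?_
  rw [Algebra.TensorProduct.tmul_mul_tmul, Algebra.TensorProduct.tmul_mul_tmul, (hc (v i)).eq,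
    one_mul, mul_one]

lemma grassmann_pow_mul_ι (u : V) (v : κ → V) (x : κ → B) (k : ℕ) :
    (∑ i, ι ℚ (v i) ⊗ₜ[ℚ] x i) ^ k * (ι ℚ u ⊗ₜ[ℚ] 1)
      = (-1 : ℚ) ^ k • ((ι ℚ u ⊗ₜ[ℚ] 1) * (∑ i, ι ℚ (v i) ⊗ₜ[ℚ] x i) ^ k) := by
  have h1 : (∑ i, ι ℚ (v i) ⊗ₜ[ℚ] x i) * (ι ℚ u ⊗ₜ[ℚ] (1 : B))
      = (-1 : ℚ) • ((ι ℚ u ⊗ₜ[ℚ] 1) * ∑ i, ι ℚ (v i) ⊗ₜ[ℚ] x i) := by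
    rw [Finset.mul_sum, Finset.sum_mul, Finset.smul_sum]
    refine Finset.sum_congr rfl fun i _ => ?_
    rw [Algebra.TensorProduct.tmul_mul_tmul, Algebra.TensorProduct.tmul_mul_tmul,
      ι_mul_ι_swap_s18 (v i) u, TensorProduct.neg_tmul, one_mul, mul_one, neg_smul, one_smul]
  induction k with
  | zero => simp
  | succ k ih =>
    rw [pow_succ, mul_assoc, h1, mul_smul_comm, ← mul_assoc, ih, smul_mul_assoc, smul_smul,
      mul_assoc, _root_.pow_succ' (-1 : ℚ)]

lemma grassmann_mul_pow_mul_eq_zero (u : V) (b : B) (v : κ → V) (x : κ → B) (k : ℕ) :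
    (ι ℚ u ⊗ₜ[ℚ] b) * (∑ i, ι ℚ (v i) ⊗ₜ[ℚ] x i) ^ k * (ι ℚ u ⊗ₜ[ℚ] b) = 0 := by
  have h : ι ℚ u ⊗ₜ[ℚ] b = (ι ℚ u ⊗ₜ[ℚ] 1) * ((1 : ExteriorAlgebra ℚ V) ⊗ₜ[ℚ] b) := by simp
  nth_rewrite 2 [h]
  rw [← mul_assoc, mul_assoc (ι ℚ u ⊗ₜ[ℚ] b), grassmann_pow_mul_ι, mul_smul_comm, ← mul_assoc,
    Algebra.TensorProduct.tmul_mul_tmul, ι_sq_zero, TensorProduct.zero_tmul, zero_mul, smul_zero,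
    zero_mul]

lemma add_pow_succ_of_mul_pow_mul_eq_zero {A : Type*} [Ring A] {X z : A} {P : ℕ → A}
    (hP0 : P 0 = z) (hP : ∀ q, P (q + 1) = P q * X + X ^ (q + 1) * z)
    (hzz : ∀ k, z * X ^ k * z = 0) (q : ℕ) : (X + z) ^ (q + 1) = X ^ (q + 1) + P q := by
  have hPz : ∀ q k, P q * X ^ k * z = 0 := by
    intro q
    induction q with
    | zero => simpa [hP0] using hzz
    | succ q ih =>
      intro k
      rw [hP, add_mul, add_mul, mul_assoc (P q), ← _root_.pow_succ', ih, zero_add, mul_assoc, mul_assoc,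
        ← mul_assoc z, hzz, mul_zero]
  induction q with
  | zero => simp [hP0]
  | succ q ih =>
    have h := hPz q 0
    rw [pow_zero, mul_one] at h
    rw [pow_succ, ih, hP, mul_add, add_mul, add_mul, h, ← pow_succ]
    abel

variable {α : Type*} {s : α → B} {g : α → α → ℚ} {W W' : Submodule ℚ B}

lemma grassmann_commutator (u : V) (b : B) (v : κ → V) (x : κ → B) :
    (ι ℚ u ⊗ₜ[ℚ] b) * (∑ i, ι ℚ (v i) ⊗ₜ[ℚ] x i) - (∑ i, ι ℚ (v i) ⊗ₜ[ℚ] x i) * (ι ℚ u ⊗ₜ[ℚ] b)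
      = ∑ i, (ι ℚ u * ι ℚ (v i)) ⊗ₜ[ℚ] (b * x i + x i * b) := by
  rw [Finset.mul_sum, Finset.sum_mul, ← Finset.sum_sub_distrib]
  refine Finset.sum_congr rfl fun i _ => ?_
  rw [Algebra.TensorProduct.tmul_mul_tmul, Algebra.TensorProduct.tmul_mul_tmul,
    ι_mul_ι_swap_s18 (v i) u, TensorProduct.neg_tmul, sub_neg_eq_add, TensorProduct.tmul_add]

lemma grassmann_double_commutator
    (hrel : ∀ a b c, (s a * s b + s b * s a) * s c - s c * (s a * s b + s b * s a)
      = -(g a c • s b) - g b c • s a)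
    (u : V) (v : κ → V) (a₀ : α) (a : κ → α) :
    (∑ i, (ι ℚ u * ι ℚ (v i)) ⊗ₜ[ℚ] (s a₀ * s (a i) + s (a i) * s a₀))
        * (∑ i, ι ℚ (v i) ⊗ₜ[ℚ] s (a i))
      - (∑ i, ι ℚ (v i) ⊗ₜ[ℚ] s (a i))
        * (∑ i, (ι ℚ u * ι ℚ (v i)) ⊗ₜ[ℚ] (s a₀ * s (a i) + s (a i) * s a₀))
      = ((-∑ i, ∑ j, g (a i) (a j) • (ι ℚ (v i) * ι ℚ (v j))) ⊗ₜ[ℚ] (1 : B))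
          * (ι ℚ u ⊗ₜ[ℚ] s a₀)
        + ((∑ j, g a₀ (a j) • (ι ℚ u * ι ℚ (v j))) ⊗ₜ[ℚ] (1 : B))
          * (∑ i, ι ℚ (v i) ⊗ₜ[ℚ] s (a i)) := by
  have hL : (∑ i, (ι ℚ u * ι ℚ (v i)) ⊗ₜ[ℚ] (s a₀ * s (a i) + s (a i) * s a₀))
        * (∑ i, ι ℚ (v i) ⊗ₜ[ℚ] s (a i))
      - (∑ i, ι ℚ (v i) ⊗ₜ[ℚ] s (a i))
        * (∑ i, (ι ℚ u * ι ℚ (v i)) ⊗ₜ[ℚ] (s a₀ * s (a i) + s (a i) * s a₀))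
      = ∑ i, ∑ j, (ι ℚ u * ι ℚ (v i) * ι ℚ (v j)) ⊗ₜ[ℚ]
          (-(g a₀ (a j) • s (a i)) - g (a i) (a j) • s a₀) := by
    rw [Finset.sum_mul_sum, Finset.sum_mul_sum, Finset.sum_comm (γ := κ) (s := Finset.univ)
      (f := fun i j => (ι ℚ (v i) ⊗ₜ[ℚ] s (a i))
        * ((ι ℚ u * ι ℚ (v j)) ⊗ₜ[ℚ] (s a₀ * s (a j) + s (a j) * s a₀))),
      ← Finset.sum_sub_distrib]
    refine Finset.sum_congr rfl fun i _ => ?_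
    rw [← Finset.sum_sub_distrib]
    refine Finset.sum_congr rfl fun j _ => ?_
    rw [Algebra.TensorProduct.tmul_mul_tmul, Algebra.TensorProduct.tmul_mul_tmul,
      ← (commute_ι_mul_ι u (v i) (v j)).eq, ← TensorProduct.tmul_sub, hrel]
  have hΓ : ((-∑ i, ∑ j, g (a i) (a j) • (ι ℚ (v i) * ι ℚ (v j))) ⊗ₜ[ℚ] (1 : B))
          * (ι ℚ u ⊗ₜ[ℚ] s a₀)
      = ∑ i, ∑ j, (ι ℚ u * ι ℚ (v i) * ι ℚ (v j)) ⊗ₜ[ℚ] (-(g (a i) (a j) • s a₀)) := by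
    rw [Algebra.TensorProduct.tmul_mul_tmul, one_mul, neg_mul, TensorProduct.neg_tmul,
      Finset.sum_mul, TensorProduct.sum_tmul, ← Finset.sum_neg_distrib]
    refine Finset.sum_congr rfl fun i _ => ?_
    rw [Finset.sum_mul, TensorProduct.sum_tmul, ← Finset.sum_neg_distrib]
    refine Finset.sum_congr rfl fun j _ => ?_
    rw [smul_mul_assoc, (commute_ι_mul_ι (v i) (v j) u).eq, TensorProduct.tmul_neg,
      TensorProduct.smul_tmul, mul_assoc]
  have hδ : ((∑ j, g a₀ (a j) • (ι ℚ u * ι ℚ (v j))) ⊗ₜ[ℚ] (1 : B))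
          * (∑ i, ι ℚ (v i) ⊗ₜ[ℚ] s (a i))
      = ∑ i, ∑ j, (ι ℚ u * ι ℚ (v i) * ι ℚ (v j)) ⊗ₜ[ℚ] (-(g a₀ (a j) • s (a i))) := by
    rw [Finset.mul_sum]
    refine Finset.sum_congr rfl fun i _ => ?_
    rw [Algebra.TensorProduct.tmul_mul_tmul, one_mul, Finset.sum_mul, TensorProduct.sum_tmul]
    refine Finset.sum_congr rfl fun j _ => ?_
    rw [smul_mul_assoc, mul_assoc, ι_mul_ι_swap_s18 (v j) (v i), mul_neg, smul_neg,
      TensorProduct.neg_tmul, TensorProduct.tmul_neg, TensorProduct.smul_tmul, mul_assoc]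
  rw [hL, hΓ, hδ, ← Finset.sum_add_distrib]
  refine Finset.sum_congr rfl fun i _ => ?_
  rw [← Finset.sum_add_distrib]
  refine Finset.sum_congr rfl fun j _ => ?_
  rw [← TensorProduct.tmul_add, neg_add_eq_sub, sub_eq_add_neg]

lemma grassmann_anticommutator_mem
    (hrel : ∀ a b c, (s a * s b + s b * s a) * s c - s c * (s a * s b + s b * s a)
      = -(g a c • s b) - g b c • s a)
    (hW : ∀ (p : ℕ) (a : Fin p → α), antisymProd (s ∘ a) ∈ W) (hWW' : W ≤ W')
    (hW' : ∀ a b, ∀ w ∈ W, (s a * s b + s b * s a) * w ∈ W')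
    (u : V) (v : κ → V) (a₀ : α) (a : κ → α) (q : ℕ) :
    (ι ℚ u ⊗ₜ[ℚ] s a₀) * (∑ i, ι ℚ (v i) ⊗ₜ[ℚ] s (a i)) ^ q
        + (∑ i, ι ℚ (v i) ⊗ₜ[ℚ] s (a i)) ^ q * (ι ℚ u ⊗ₜ[ℚ] s a₀) ∈ grassmannSpan V W ∧
      (ι ℚ u ⊗ₜ[ℚ] s a₀) * (∑ i, ι ℚ (v i) ⊗ₜ[ℚ] s (a i)) ^ q ∈ grassmannSpan V W' := by
  set X := ∑ i, ι ℚ (v i) ⊗ₜ[ℚ] s (a i) with hX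
  set z := ι ℚ u ⊗ₜ[ℚ] s a₀ with hz
  set γ : ExteriorAlgebra ℚ V := -∑ i, ∑ j, g (a i) (a j) • (ι ℚ (v i) * ι ℚ (v j)) with hγ
  set η : ExteriorAlgebra ℚ V := ∑ j, g a₀ (a j) • (ι ℚ u * ι ℚ (v j)) with hη
  have hγc : ∀ w : V, Commute γ (ι ℚ w) := fun w =>
    (Commute.sum_left _ _ _ fun i _ => Commute.sum_left _ _ _ fun j _ =>
      (commute_ι_mul_ι (v i) (v j) w).smul_left _).neg_left
  have hηc : ∀ w : V, Commute η (ι ℚ w) := fun w =>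
    Commute.sum_left _ _ _ fun j _ => (commute_ι_mul_ι u (v j) w).smul_left _
  have hΓ : (γ ⊗ₜ[ℚ] 1) * X = X * (γ ⊗ₜ[ℚ] 1) := tmul_one_commute hγc v (s ∘ a)
  have hδ : (η ⊗ₜ[ℚ] 1) * X = X * (η ⊗ₜ[ℚ] 1) := tmul_one_commute hηc v (s ∘ a)
  have hY := grassmann_commutator u (s a₀) v (s ∘ a)
  have hYY : (z * X - X * z) * X - X * (z * X - X * z) = (γ ⊗ₜ[ℚ] 1) * z + (η ⊗ₜ[ℚ] 1) * X := by
    have h := grassmann_double_commutator hrel u v a₀ a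
    simp only [Function.comp_apply] at hY
    rw [← hY] at h
    exact h
  have hle : grassmannSpan V W ≤ grassmannSpan V W' :=
    Submodule.span_mono fun y ⟨c, w, hw, hy⟩ => ⟨c, w, hWW' hw, hy⟩
  have hone : ∀ (T : Submodule ℚ B) (c : ExteriorAlgebra ℚ V),
      ∀ y ∈ grassmannSpan V T, (c ⊗ₜ[ℚ] 1) * y ∈ grassmannSpan V T :=
    fun T c y hy => tmul_mul_mem_grassmannSpan (fun w hw => by rwa [one_mul]) c hy
  have hXW : ∀ k, X ^ k ∈ grassmannSpan V W := fun k =>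
    grassmann_sum_pow_mem v (s ∘ a) k fun f => hW k (a ∘ f)
  obtain ⟨P, hP0, hP⟩ : ∃ P : ℕ → ExteriorAlgebra ℚ V ⊗[ℚ] B,
      P 0 = z ∧ ∀ q, P (q + 1) = P q * X + X ^ (q + 1) * z :=
    ⟨fun q => Nat.rec z (fun q y => y * X + X ^ (q + 1) * z) q, rfl, fun _ => rfl⟩
  have hPW : ∀ q, P q ∈ grassmannSpan V W := by
    intro q
    have h := add_pow_succ_of_mul_pow_mul_eq_zero hP0 hP
      (grassmann_mul_pow_mul_eq_zero u (s a₀) v (s ∘ a)) q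
    have h' := grassmann_sum_pow_mem (W := W) (fun i : Option κ => i.elim u v)
      (fun i : Option κ => s (i.elim a₀ a)) (q + 1) fun f => hW (q + 1) fun i => (f i).elim a₀ a
    simp only [Fintype.sum_option, Option.elim_none, Option.elim_some] at h'
    rw [← hX, ← hz, add_comm z] at h'
    have h'' := (grassmannSpan V W).sub_mem h' (hXW (q + 1))
    rwa [sub_eq_of_eq_add' h] at h''
  have hJ := anticommutator_pow_mem hP0 hP hΓ hδ hYY (hone W γ) (hone W η) hXW hPW
  refine ⟨hJ q, mul_pow_mem_of_anticommutator_mem hΓ hδ hYY (hone W' γ)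
    (fun k => hle (hone W η _ (hXW k))) (fun k => ?_) (fun k => hle (hJ k)) q⟩
  have h : (z * X - X * z) * X ^ k
      = ∑ i, ((ι ℚ u * ι ℚ (v i)) ⊗ₜ[ℚ] (s a₀ * s (a i) + s (a i) * s a₀)) * X ^ k := by
    rw [← Finset.sum_mul]
    exact congrArg (· * X ^ k) hY
  rw [h]
  exact Submodule.sum_mem _ fun i _ => tmul_mul_mem_grassmannSpan (hW' a₀ (a i)) _ (hXW k)

/-- The nonstandard action on antisymmetrized products. -/
lemma antisymProd_nonstandard
    (hrel : ∀ a b c, (s a * s b + s b * s a) * s c - s c * (s a * s b + s b * s a)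
      = -(g a c • s b) - g b c • s a)
    (hW : ∀ (p : ℕ) (a : Fin p → α), antisymProd (s ∘ a) ∈ W) (hWW' : W ≤ W')
    (hW' : ∀ a b, ∀ w ∈ W, (s a * s b + s b * s a) * w ∈ W') {p : ℕ} (a₀ : α) (a : Fin p → α) :
    s a₀ * antisymProd (s ∘ a) + (-1 : ℚ) ^ p • (antisymProd (s ∘ a) * s a₀) ∈ W ∧
      s a₀ * antisymProd (s ∘ a) ∈ W' := by
  obtain ⟨ψ, hψ⟩ := exists_top_functional p
  set u : Fin (p + 1) → ℚ := Pi.single 0 1 with hu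
  set v : Fin p → Fin (p + 1) → ℚ := fun i => Pi.single i.succ 1 with hv
  obtain ⟨hJ, hzX⟩ := grassmann_anticommutator_mem hrel hW hWW' hW' u v a₀ a p
  have hE : grassmannEval (ψ ∘ₗ LinearMap.mulLeft ℚ (ι ℚ u))
      ((∑ i, ι ℚ (v i) ⊗ₜ[ℚ] s (a i)) ^ p) = antisymProd (s ∘ a) := by
    have h := grassmannEval_sum_pow (ψ ∘ₗ LinearMap.mulLeft ℚ (ι ℚ u)) v (s ∘ a)
    have hψ' : (ψ ∘ₗ LinearMap.mulLeft ℚ (ι ℚ u)) (ιMulti ℚ p v) = 1 := hψ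
    rw [hψ', one_smul] at h
    exact h
  have hl : grassmannEval ψ ((ι ℚ u ⊗ₜ[ℚ] s a₀) * (∑ i, ι ℚ (v i) ⊗ₜ[ℚ] s (a i)) ^ p)
      = s a₀ * antisymProd (s ∘ a) := by
    rw [grassmannEval_tmul_mul, hE]
  have hr : grassmannEval ψ ((∑ i, ι ℚ (v i) ⊗ₜ[ℚ] s (a i)) ^ p * (ι ℚ u ⊗ₜ[ℚ] s a₀))
      = (-1 : ℚ) ^ p • (antisymProd (s ∘ a) * s a₀) := by
    have h : ι ℚ u ⊗ₜ[ℚ] s a₀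
        = (ι ℚ u ⊗ₜ[ℚ] 1) * ((1 : ExteriorAlgebra ℚ (Fin (p + 1) → ℚ)) ⊗ₜ[ℚ] s a₀) := by simp
    rw [h, ← mul_assoc, grassmannEval_mul_tmul_one, grassmann_pow_mul_ι, map_smul,
      grassmannEval_tmul_mul, hE, one_mul, smul_mul_assoc]
  constructor
  · have h := grassmannEval_mem ψ hJ
    rwa [map_add, hl, hr] at h
  · have h := grassmannEval_mem ψ hzX
    rwa [hl] at h

end NonstandardAction

section AdjointAction

variable {B : Type*} [Ring B]

lemma commutator_mul (t x y : B) :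
    t * (x * y) - x * y * t = (t * x - x * t) * y + x * (t * y - y * t) := by
  noncomm_ring

lemma commutator_anticommutator (t x y : B) :
    t * (x * y + y * x) - (x * y + y * x) * t
      = (t * x - x * t) * y + x * (t * y - y * t)
        + ((t * y - y * t) * x + y * (t * x - x * t)) := by
  noncomm_ring

lemma mul_mul_eq_add_commutator (t x y : B) : t * x * y = x * (t * y) + (t * x - x * t) * y := by
  noncomm_ring

lemma commutator_mul_mul (t x y w : B) :
    (t * (x * y) - x * y * t) * w = x * ((t * y - y * t) * w) - (x * t - t * x) * y * w := by
  noncomm_ring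

lemma smul_add_smul_mul_mul [Algebra ℚ B] (r r' : ℚ) (x x' y w : B) :
    (r • x + r' • x') * y * w = r • (x * y * w) + r' • (x' * y * w) := by
  simp only [add_mul, smul_mul_assoc]

lemma nonstandard_mul [Algebra ℚ B] (r : ℚ) (t x y : B) :
    t * (x * y) + r • (x * y * t) = (t * x - x * t) * y + x * (t * y + r • (y * t)) := by
  rw [mul_add, mul_smul_comm, sub_mul]
  simp only [mul_assoc]
  abel

lemma add_neg_one_pow_smul_of_odd [Algebra ℚ B] {p : ℕ} (hp : Odd p) (x y : B) :
    x + (-1 : ℚ) ^ p • y = x - y := by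
  rw [hp.neg_one_pow, neg_smul, one_smul, sub_eq_add_neg]

lemma neg_smul_sub_smul [Algebra ℚ B] (r r' : ℚ) (x y : B) :
    -(r • x) - r' • y = (-r) • x + (-r') • y := by
  module

lemma commutator_prod_ofFn (t : B) {p : ℕ} (y : Fin p → B) :
    t * (List.ofFn y).prod - (List.ofFn y).prod * t
      = ∑ j, (List.ofFn (Function.update y j (t * y j - y j * t))).prod := by
  induction p with
  | zero => simp
  | succ p ih =>
    have h : ∀ (j : Fin p) (b : B), (fun i : Fin p => Function.update y j.succ b i.succ)
        = Function.update (fun i : Fin p => y i.succ) j b := fun j b =>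
      Function.update_comp_eq_of_injective y (Fin.succ_injective p) j b
    rw [Fin.sum_univ_succ]
    simp only [List.ofFn_succ, List.prod_cons, Function.update_self, h, ne_eq, Fin.succ_ne_zero,
      not_false_eq_true, Function.update_of_ne, (Fin.succ_ne_zero _).symm]
    rw [← Finset.mul_sum, ← ih]
    noncomm_ring

lemma commutator_antisymProd (t : B) {p : ℕ} (x : Fin p → B) :
    t * antisymProd x - antisymProd x * t
      = ∑ j, antisymProd (Function.update x j (t * x j - x j * t)) := by
  simp only [antisymProd]
  rw [Finset.sum_comm, Finset.mul_sum, Finset.sum_mul, ← Finset.sum_sub_distrib]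
  refine Finset.sum_congr rfl fun s _ => ?_
  rw [mul_smul_comm, smul_mul_assoc, ← smul_sub, commutator_prod_ofFn, ← Finset.smul_sum]
  congr 1
  refine (Finset.sum_congr rfl fun j _ => ?_).trans (Equiv.sum_comp s _)
  exact congrArg (fun y => (List.ofFn y).prod)
    (Function.update_comp_eq_of_injective x s.injective j _).symm

lemma antisymProd_update_mem [Algebra ℚ B] {W : Submodule ℚ B} {p : ℕ} {x : Fin p → B} {j : Fin p}
    {y y' : B} (hy : antisymProd (Function.update x j y) ∈ W)
    (hy' : antisymProd (Function.update x j y') ∈ W) (r r' : ℚ) :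
    antisymProd (Function.update x j (r • y + r' • y')) ∈ W := by
  have h : ∀ x : Fin p → B,
      antisymProd x = (MultilinearMap.mkPiAlgebraFin ℚ p B).alternatization x := by
    intro x
    simp [antisymProd, MultilinearMap.alternatization_apply, Units.smul_def]
  rw [h] at hy hy' ⊢
  rw [AlternatingMap.map_update_add, AlternatingMap.map_update_smul,
    AlternatingMap.map_update_smul]
  exact W.add_mem (W.smul_mem _ hy) (W.smul_mem _ hy')

end AdjointAction

section OrthosymplecticFiltration

variable {n d e : ℕ}

lemma σσ_commutator_sub (a b c : Fin (2*n)) :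
    σσ n a b * σ n c - σ n c * σσ n a b = -(gmat n a c • σ n b) - gmat n b c • σ n a := by
  have h := RingQuot.mkAlgHom_rel ℚ (OspRel.rel a b c)
  simp only [map_mul, map_add, map_sub, AlgHom.commutes] at h
  simp only [σσ, σ]
  rw [h, Algebra.smul_def, Algebra.smul_def]
  abel

lemma σσ_commutator (a b c : Fin (2*n)) :
    σσ n a b * σ n c - σ n c * σσ n a b = (-gmat n a c) • σ n b + (-gmat n b c) • σ n a :=
  (σσ_commutator_sub a b c).trans (neg_smul_sub_smul _ _ _ _)

lemma brkt_mem_Omega {p : ℕ} (a : Fin p → Fin (2*n)) : brkt n p a ∈ Omega n :=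
  Submodule.subset_span ⟨p, a, rfl⟩

lemma one_mem_Bfil : (1 : U n) ∈ Bfil n d :=
  Submodule.subset_span ⟨[], by simp, by simp⟩

lemma prod_mem_Bfil (l : List (Fin (2*n) × Fin (2*n))) (hl : l.length ≤ d) :
    (l.map fun q => σσ n q.1 q.2).prod ∈ Bfil n d :=
  Submodule.subset_span ⟨l, hl, rfl⟩

lemma σσ_mem_Bfil (a b : Fin (2*n)) : σσ n a b ∈ Bfil n 1 := by
  simpa using prod_mem_Bfil (d := 1) [(a, b)] (by simp)

lemma Bfil_mono (h : d ≤ e) : Bfil n d ≤ Bfil n e :=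
  Submodule.span_mono fun _ ⟨l, hl, hx⟩ => ⟨l, hl.trans h, hx⟩

lemma mul_mem_Bfil {x y : U n} (hx : x ∈ Bfil n d) (hy : y ∈ Bfil n e) :
    x * y ∈ Bfil n (d + e) := by
  have h : Bfil n d * Bfil n e ≤ Bfil n (d + e) := by
    rw [Bfil, Bfil, Submodule.span_mul_span]
    refine Submodule.span_le.2 ?_
    rintro _ ⟨_, ⟨l, hl, rfl⟩, _, ⟨l', hl', rfl⟩, rfl⟩
    have := prod_mem_Bfil (n := n) (d := d + e) (l ++ l') (by simp; omega)
    simpa using this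
  exact h (Submodule.mul_mem_mul hx hy)

lemma Vfil_eq_mul : Vfil n d = Bfil n d * Omega n := by
  apply le_antisymm
  · refine Submodule.span_le.2 ?_
    rintro _ ⟨b, hb, w, hw, rfl⟩
    exact Submodule.mul_mem_mul hb hw
  · exact Submodule.mul_le.2 fun b hb w hw => Submodule.subset_span ⟨b, hb, w, hw, rfl⟩

lemma mul_mem_Vfil {b w : U n} (hb : b ∈ Bfil n d) (hw : w ∈ Omega n) : b * w ∈ Vfil n d :=
  Submodule.subset_span ⟨b, hb, w, hw, rfl⟩

lemma Bfil_mul_mem_Vfil {b x : U n} (hb : b ∈ Bfil n d) (hx : x ∈ Vfil n e) :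
    b * x ∈ Vfil n (d + e) := by
  have h : Bfil n d * Vfil n e ≤ Vfil n (d + e) := by
    rw [Vfil_eq_mul, Vfil_eq_mul, ← mul_assoc]
    exact mul_le_mul_left (Submodule.mul_le.2 fun _ hx _ hy => mul_mem_Bfil hx hy) _
  exact h (Submodule.mul_mem_mul hb hx)

lemma Vfil_mono (h : d ≤ e) : Vfil n d ≤ Vfil n e := by
  rw [Vfil_eq_mul, Vfil_eq_mul]
  exact mul_le_mul_left (Bfil_mono h) _

lemma Omega_le_Vfil : Omega n ≤ Vfil n d := fun w hw => by
  simpa using mul_mem_Vfil one_mem_Bfil hw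

lemma σ_nonstandard_brkt {p : ℕ} (c : Fin (2*n)) (a : Fin p → Fin (2*n)) :
    σ n c * brkt n p a + (-1 : ℚ) ^ p • (brkt n p a * σ n c) ∈ Omega n ∧
      σ n c * brkt n p a ∈ Vfil n 1 :=
  antisymProd_nonstandard (W := Omega n) (W' := Vfil n 1) (s := σ n) (g := gmat n)
    σσ_commutator_sub
    (fun _ a => brkt_mem_Omega a) Omega_le_Vfil
    (fun a b _ hw => mul_mem_Vfil (σσ_mem_Bfil a b) hw) c a

lemma σ_mul_mem_Vfil (c : Fin (2*n)) {w : U n} (hw : w ∈ Omega n) : σ n c * w ∈ Vfil n 1 := by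
  suffices h : Omega n ≤ (Vfil n 1).comap (LinearMap.mulLeft ℚ (σ n c)) from h hw
  refine Submodule.span_le.2 ?_
  rintro _ ⟨p, a, rfl⟩
  exact (σ_nonstandard_brkt c a).2

lemma σσ_commutator_mem_Omega (b c : Fin (2*n)) {w : U n} (hw : w ∈ Omega n) :
    σσ n b c * w - w * σσ n b c ∈ Omega n := by
  suffices h : Omega n ≤ (Omega n).comap
      (LinearMap.mulLeft ℚ (σσ n b c) - LinearMap.mulRight ℚ (σσ n b c)) from h hw
  refine Submodule.span_le.2 ?_
  rintro _ ⟨p, a, rfl⟩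
  change σσ n b c * antisymProd (σ n ∘ a) - antisymProd (σ n ∘ a) * σσ n b c ∈ Omega n
  rw [commutator_antisymProd]
  refine Submodule.sum_mem _ fun j _ => ?_
  have h : ∀ e, antisymProd (Function.update (σ n ∘ a) j (σ n e)) ∈ Omega n := by
    intro e
    rw [← Function.comp_update]
    exact brkt_mem_Omega (Function.update a j e)
  rw [Function.comp_apply, σσ_commutator]
  exact antisymProd_update_mem (h c) (h b) _ _

lemma σσ_commutator_σσ_mem (b c e f : Fin (2*n)) :
    σσ n b c * σσ n e f - σσ n e f * σσ n b c ∈ Bfil n 1 := by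
  have h : σσ n b c * σσ n e f - σσ n e f * σσ n b c
      = (-gmat n b e) • σσ n c f + (-gmat n c e) • σσ n b f
        + ((-gmat n b f) • σσ n e c + (-gmat n c f) • σσ n e b) := by
    rw [σσ.eq_def n e f, commutator_anticommutator, σσ_commutator, σσ_commutator]
    simp only [σσ, add_mul, mul_add, smul_mul_assoc, mul_smul_comm, smul_add]
    abel
  rw [h]
  exact add_mem (add_mem (Submodule.smul_mem _ _ (σσ_mem_Bfil _ _))
    (Submodule.smul_mem _ _ (σσ_mem_Bfil _ _))) (add_mem
    (Submodule.smul_mem _ _ (σσ_mem_Bfil _ _)) (Submodule.smul_mem _ _ (σσ_mem_Bfil _ _)))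

lemma σσ_commutator_mem_Bfil (b c : Fin (2*n)) {x : U n} (hx : x ∈ Bfil n d) :
    σσ n b c * x - x * σσ n b c ∈ Bfil n d := by
  suffices h : Bfil n d ≤ (Bfil n d).comap
      (LinearMap.mulLeft ℚ (σσ n b c) - LinearMap.mulRight ℚ (σσ n b c)) from h hx
  refine Submodule.span_le.2 ?_
  rintro _ ⟨l, hl, rfl⟩
  refine Bfil_mono hl ?_
  clear hl
  change σσ n b c * (l.map fun q => σσ n q.1 q.2).prod
    - (l.map fun q => σσ n q.1 q.2).prod * σσ n b c ∈ Bfil n l.length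
  induction l with
  | nil => simp
  | cons q l ih =>
    rw [List.map_cons, List.prod_cons, List.length_cons]
    set r := (l.map fun q => σσ n q.1 q.2).prod with hr
    rw [commutator_mul, add_comm l.length]
    exact add_mem (mul_mem_Bfil (σσ_commutator_σσ_mem _ _ _ _) (prod_mem_Bfil l le_rfl))
      (mul_mem_Bfil (σσ_mem_Bfil _ _) ih)

lemma σσ_commutator_mem_Vfil (b c : Fin (2*n)) {x : U n} (hx : x ∈ Vfil n d) :
    σσ n b c * x - x * σσ n b c ∈ Vfil n d := by
  suffices h : Vfil n d ≤ (Vfil n d).comap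
      (LinearMap.mulLeft ℚ (σσ n b c) - LinearMap.mulRight ℚ (σσ n b c)) from h hx
  refine Submodule.span_le.2 ?_
  rintro _ ⟨y, hy, w, hw, rfl⟩
  change σσ n b c * (y * w) - y * w * σσ n b c ∈ Vfil n d
  rw [commutator_mul]
  exact add_mem (mul_mem_Vfil (σσ_commutator_mem_Bfil b c hy) hw)
    (mul_mem_Vfil hy (σσ_commutator_mem_Omega b c hw))

lemma σ_commutator_prod_mul_mem (l : List (Fin (2*n) × Fin (2*n))) (c : Fin (2*n)) {w : U n}
    (hw : w ∈ Omega n) :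
    (σ n c * (l.map fun q => σσ n q.1 q.2).prod - (l.map fun q => σσ n q.1 q.2).prod * σ n c) * w
      ∈ Vfil n l.length := by
  induction l generalizing c with
  | nil => simp
  | cons q l ih =>
    rw [List.map_cons, List.prod_cons, List.length_cons]
    have hr := prod_mem_Bfil l le_rfl
    set r := (l.map fun q => σσ n q.1 q.2).prod with hr'
    have hσ : ∀ f, σ n f * r * w ∈ Vfil n (l.length + 1) := by
      intro f
      rw [mul_mul_eq_add_commutator]
      exact add_mem (Bfil_mul_mem_Vfil hr (σ_mul_mem_Vfil f hw))
        (Vfil_mono (Nat.le_succ _) (ih f))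
    have h2 : ((-gmat n q.1 c) • σ n q.2 + (-gmat n q.2 c) • σ n q.1) * r * w
        = (-gmat n q.1 c) • (σ n q.2 * r * w) + (-gmat n q.2 c) • (σ n q.1 * r * w) :=
      smul_add_smul_mul_mul _ _ _ _ _ _
    rw [commutator_mul_mul, σσ_commutator, h2]
    have h1 := Bfil_mul_mem_Vfil (σσ_mem_Bfil q.1 q.2) (ih c)
    rw [add_comm 1] at h1
    exact sub_mem h1 (add_mem (Submodule.smul_mem _ _ (hσ _))
      (Submodule.smul_mem _ _ (hσ _)))

lemma σ_commutator_mul_mem_Vfil (c : Fin (2*n)) {b w : U n} (hb : b ∈ Bfil n d)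
    (hw : w ∈ Omega n) : (σ n c * b - b * σ n c) * w ∈ Vfil n d := by
  suffices h : Bfil n d ≤ (Vfil n d).comap (LinearMap.mulRight ℚ w ∘ₗ
      (LinearMap.mulLeft ℚ (σ n c) - LinearMap.mulRight ℚ (σ n c))) from h hb
  refine Submodule.span_le.2 ?_
  rintro _ ⟨l, hl, rfl⟩
  exact Vfil_mono hl (σ_commutator_prod_mul_mem l c hw)

lemma σ_nonstandard_mem_Vfil (c : Fin (2*n)) {p : ℕ} (a : Fin p → Fin (2*n)) {b : U n}
    (hb : b ∈ Bfil n d) :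
    σ n c * (b * brkt n p a) + (-1 : ℚ) ^ p • (b * brkt n p a * σ n c) ∈ Vfil n d := by
  rw [nonstandard_mul]
  exact add_mem (σ_commutator_mul_mem_Vfil c hb (brkt_mem_Omega a))
    (mul_mem_Vfil hb (σ_nonstandard_brkt c a).1)

end OrthosymplecticFiltration

/-- Each `V_d = B_d·Ω` is stable under the nonstandard action: (i) it is
stable under the adjoint action of every bosonic generator `σ_{bc}`; (ii) for every fermionic
generator `σₐ`, elements of `V_d` of even (resp. odd) fermionic parity are sent into `V_d` by
the anticommutator (resp. the commutator) with `σₐ`.  Hence `U(osp(1|2n))` splits into finite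
dimensional modules under the nonstandard action. -/
theorem stmt18 (n : ℕ) (hn : 1 ≤ n) (d : ℕ) :
    (∀ (b c : Fin (2*n)), ∀ x ∈ Vfil n d, σσ n b c * x - x * σσ n b c ∈ Vfil n d) ∧
    (∀ a : Fin (2*n),
      (∀ x ∈ VfilPar n d 0, σ n a * x + x * σ n a ∈ Vfil n d) ∧
      (∀ x ∈ VfilPar n d 1, σ n a * x - x * σ n a ∈ Vfil n d)) := by
  refine ⟨fun b c x hx => σσ_commutator_mem_Vfil b c hx, fun a => ⟨fun x hx => ?_, fun x hx => ?_⟩⟩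
  · suffices h : VfilPar n d 0 ≤ (Vfil n d).comap
        (LinearMap.mulLeft ℚ (σ n a) + LinearMap.mulRight ℚ (σ n a)) from h hx
    refine Submodule.span_le.2 ?_
    rintro _ ⟨b, hb, p, hp, t, rfl⟩
    have h := σ_nonstandard_mem_Vfil a t hb
    rwa [(Nat.even_iff.2 hp).neg_one_pow, one_smul] at h
  · suffices h : VfilPar n d 1 ≤ (Vfil n d).comap
        (LinearMap.mulLeft ℚ (σ n a) - LinearMap.mulRight ℚ (σ n a)) from h hx
    refine Submodule.span_le.2 ?_
    rintro _ ⟨b, hb, p, hp, t, rfl⟩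
    have h := σ_nonstandard_mem_Vfil a t hb
    have e : σ n a * (b * brkt n p t) + (-1 : ℚ) ^ p • (b * brkt n p t * σ n a)
        = σ n a * (b * brkt n p t) - b * brkt n p t * σ n a :=
      add_neg_one_pow_smul_of_odd (Nat.odd_iff.2 hp) _ _
    rw [e] at h
    exact h

end
end
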